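/- arXiv:2308.13107 — 3 statements merged into one kernel-verified Lean document; each statement's English description precedes it below -/
import Mathlib

section
/- Any set of points in the Euclidean plane that spans at most 3 distinct triangles contains at most 6 points. -/
open Real EuclideanGeometry

noncomputable section

/-- The Euclidean plane. -/
abbrev Plane : Type := EuclideanSpace ℝ (Fin 2)

/-- A point of the plane from coordinates. -/
def pt (x y : ℝ) : Plane := (WithLp.equiv 2 (Fin 2 → ℝ)).symm ![x, y]

/-- Two sets of points in the plane are congruent if some isometry of `ℝ²`
maps one onto the other. -/
def Cong (S T : Set Plane) : Prop := ∃ f : Plane ≃ᵢ Plane, f '' S = T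

/-- The collection of unordered triples of pairwise distinct points of `P`. -/
def triplesOf (P : Set Plane) : Set (Set Plane) :=
  {s | ∃ a b c : Plane, a ∈ P ∧ b ∈ P ∧ c ∈ P ∧ a ≠ b ∧ a ≠ c ∧ b ≠ c ∧ s = {a, b, c}}

/-- The number of congruence classes of unordered triples of pairwise distinct
points of `P` (i.e. the number of distinct triangles spanned by `P`),
as an extended natural number. -/
def numTriangles (P : Set Plane) : ℕ∞ :=
  ((fun t => {t' ∈ triplesOf P | Cong t t'}) '' triplesOf P).encard

/-- Evaluates `n` before passing it on (this only speeds up kernel reduction). -/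
def tF {α : Type} (n : ℕ) (f : ℕ → α) : α :=
  Nat.rec (f 0) (fun k _ => f (Nat.succ k)) n

theorem tF_eq {α : Type} (n : ℕ) (f : ℕ → α) : tF n f = f n := by
  cases n <;> rfl

/-- Index of the edge `{i, j}`, `i < j`. -/
def tE (i j : ℕ) : ℕ := Nat.add (Nat.div (Nat.mul j (Nat.sub j 1)) 2) i

/-- Colour of the edge with index `p` in the packed colouring `cs`. -/
def tLook (cs p : ℕ) : ℕ := Nat.mod (Nat.div cs (Nat.pow 32 p)) 32

/-- Colour of the edge `{i, j}`, `i < j`. -/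
def tCl (cs i j : ℕ) : ℕ := tLook cs (tE i j)

/-- Colour of the edge `{a, b}` in either order. -/
def tCs (cs a b : ℕ) : ℕ := cond (Nat.blt a b) (tCl cs a b) (tCl cs b a)

/-- Code of the multiset of three colours. -/
def tCode (a b c : ℕ) : ℕ := Nat.add (Nat.pow 4 a) (Nat.add (Nat.pow 4 b) (Nat.pow 4 c))

def tAddT (cs i j : ℕ) (k : List ℕ → Bool) : List ℕ → List ℕ → Bool
  | [], T => k T
  | h :: hs, T =>
    tF (tCode (tCl cs h i) (tCl cs h j) (tCl cs i j)) fun x =>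
      cond (T.any (Nat.beq x)) (tAddT cs i j k hs T)
        (Nat.blt 2 T.length || tAddT cs i j k hs (x :: T))

def tMin (a b : ℕ) : ℕ := cond (Nat.ble a b) a b
def tMax (a b : ℕ) : ℕ := cond (Nat.ble a b) b a

/-- Kind of a two-coloured complete graph on four vertices
(edges in the order 01, 02, 12, 03, 13, 23). -/
def tKind (b1 b2 b3 b4 b5 b6 : Bool) : ℕ :=
  let n := Nat.add b1.toNat <| Nat.add b2.toNat <| Nat.add b3.toNat <| Nat.add b4.toNat <|
    Nat.add b5.toNat b6.toNat
  let m := !(xor b1 b6) && !(xor b2 b5) && !(xor b3 b4)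
  let tri := (b1 && b2 && b3) || (b1 && b4 && b5) || (b2 && b4 && b6) || (b3 && b5 && b6)
  let tri' := !(b1 || b2 || b3) || !(b1 || b4 || b5) || !(b2 || b4 || b6) || !(b3 || b5 || b6)
  cond (Nat.beq n 1) 2 <| cond (Nat.beq n 5) 3 <|
  cond (Nat.beq n 2) (cond m 4 1) <| cond (Nat.beq n 4) (cond m 5 1) <|
  cond (Nat.beq n 3) (cond tri 2 (cond tri' 3 0)) 6

def tIs (x y e : ℕ) : Bool := Nat.beq e x || Nat.beq e y

def tSame (x y k : ℕ) (f : ℕ × ℕ × ℕ) : Bool :=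
  Nat.beq f.1 x && (Nat.beq f.2.1 y && Nat.beq f.2.2 k)

def tClash (x y k : ℕ) (f : ℕ × ℕ × ℕ) : Bool :=
  Nat.beq f.1 x && (Nat.beq f.2.1 y && !Nat.beq f.2.2 k)

def tPut (x y k : ℕ) (F : List (ℕ × ℕ × ℕ)) (g : List (ℕ × ℕ × ℕ) → Bool) : Bool :=
  tF k fun k => F.any (tClash x y k) || cond (F.any (tSame x y k)) (g F) (g ((x, y, k) :: F))

def tFact2 (x y e1 e2 e3 e4 e5 e6 : ℕ) (F : List (ℕ × ℕ × ℕ))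
    (g : List (ℕ × ℕ × ℕ) → Bool) : Bool :=
  Nat.beq x y ||
  cond (tIs x y e1 && (tIs x y e2 && (tIs x y e3 && (tIs x y e4 && (tIs x y e5 && tIs x y e6)))))
    (tPut x y (tKind (Nat.beq e1 y) (Nat.beq e2 y) (Nat.beq e3 y) (Nat.beq e4 y) (Nat.beq e5 y)
      (Nat.beq e6 y)) F g)
    (g F)

def tFact (e1 e2 e3 e4 e5 e6 : ℕ) (F : List (ℕ × ℕ × ℕ))
    (g : List (ℕ × ℕ × ℕ) → Bool) : Bool :=
  tF e1 fun e1 => tF e2 fun e2 => tF e3 fun e3 => tF e4 fun e4 => tF e5 fun e5 => tF e6 fun e6 =>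
  tF (tMin e1 (tMin e2 (tMin e3 (tMin e4 (tMin e5 e6))))) fun x =>
  tF (tMax e1 (tMax e2 (tMax e3 (tMax e4 (tMax e5 e6))))) fun y =>
    tFact2 x y e1 e2 e3 e4 e5 e6 F g

def tAddF (cs i j : ℕ) (g : List (ℕ × ℕ × ℕ) → Bool) :
    List (ℕ × ℕ) → List (ℕ × ℕ × ℕ) → Bool
  | [], F => g F
  | p :: ps, F =>
    tFact (tCl cs p.1 p.2) (tCl cs p.1 i) (tCl cs p.2 i) (tCl cs p.1 j) (tCl cs p.2 j)
        (tCl cs i j) F (tAddF cs i j g ps)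

def tPairs (i : ℕ) : List (ℕ × ℕ) :=
  (List.range i).flatMap fun l => (List.range l).map fun h => (h, l)

/-- Detects two points `i`, `q` and three points `s`, `t`, `j` at equal distances from them. -/
def tG (cs i j : ℕ) : Bool :=
  (List.range j).any fun s =>
    !Nat.beq s i && (Nat.beq (tCs cs i s) (tCl cs i j) &&
    (List.range s).any fun t =>
      !Nat.beq t i && (Nat.beq (tCs cs i t) (tCl cs i j) &&
      (List.range i).any fun q =>
        !Nat.beq q s && (!Nat.beq q t &&
          (Nat.beq (tCs cs q s) (tCl cs q j) && Nat.beq (tCs cs q t) (tCl cs q j)))))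

/-- Detects that the edges at vertex `0` are not sorted by colour. -/
def tS (cs j : ℕ) : Bool :=
  (List.range (Nat.pred j)).any fun h =>
    Nat.blt 0 h && (Nat.beq (tCl cs 0 h) (tCl cs 0 j) &&
      !Nat.beq (tCl cs 0 (Nat.pred j)) (tCl cs 0 j))

def tSearch : ℕ → ℕ → ℕ → ℕ → ℕ → List ℕ → List (ℕ × ℕ × ℕ) → Bool
  | 0, _, _, _, _, _, _ => false
  | n + 1, i, j, cs, nc, T, F =>
    Nat.blt j 7 &&
    (List.range (Nat.succ nc)).all fun x =>
      tF x fun x =>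
      tF (Nat.add cs (Nat.mul x (Nat.pow 32 (tE i j)))) fun cs' =>
      tF (cond (Nat.beq x nc) (Nat.succ nc) nc) fun nc' =>
      (Nat.beq i 0 && tS cs' j) ||
      tAddT cs' i j (fun T' => tG cs' i j ||
        tAddF cs' i j (fun F' =>
          cond (Nat.beq (Nat.succ i) j) (tSearch n 0 (Nat.succ j) cs' nc' T' F')
            (tSearch n (Nat.succ i) j cs' nc' T' F')) (tPairs i) F) (List.range i) T

/-- Cayley-Menger type polynomial of four points (squared distances 01, 02, 12, 03, 13, 23). -/
def tCM (a b c d e f : ℝ) : ℝ :=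
  4 * a * b * d + (a + b - c) * (a + d - e) * (b + d - f) - a * (b + d - f) ^ 2
    - b * (a + d - e) ^ 2 - d * (a + b - c) ^ 2

/-- The relation between the two squared distances expressed by each kind. -/
def tR (k : ℕ) (s t : ℝ) : Prop :=
  match k with
  | 0 => s ^ 2 - 3 * s * t + t ^ 2 = 0
  | 1 => s ^ 2 - 4 * s * t + t ^ 2 = 0
  | 2 => t = 3 * s
  | 3 => s = 3 * t
  | 4 => t = 2 * s
  | 5 => s = 2 * t
  | _ => False

def tSel (b : Bool) (s t : ℝ) : ℝ := cond b t s

theorem tR_of_mul {m u v : ℝ} (hm : 0 < m) (h : m * (u - v) = 0) : u = v := by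
  have := (mul_eq_zero.1 h).resolve_left hm.ne'
  linarith

theorem tKind_sound (b1 b2 b3 b4 b5 b6 : Bool) (s t : ℝ) (hs : 0 < s) (ht : 0 < t)
    (h : tCM (tSel b1 s t) (tSel b2 s t) (tSel b3 s t) (tSel b4 s t) (tSel b5 s t) (tSel b6 s t)
      = 0) : tR (tKind b1 b2 b3 b4 b5 b6) s t := by
  have hs3 : 0 < s ^ 3 := by positivity
  have ht3 : 0 < t ^ 3 := by positivity
  have hss : 0 < s ^ 2 := by positivity
  have htt : 0 < t ^ 2 := by positivity
  have hst : 0 < s * t := by positivity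
  have hst' : 0 < s + t := by positivity
  cases b1 <;> cases b2 <;> cases b3 <;> cases b4 <;> cases b5 <;> cases b6 <;>
    simp only [tSel, cond, tCM] at h <;>
    first
    | (change False; linarith)
    | (change t = 3 * s; apply tR_of_mul hst; linear_combination -h)
    | (change t = 3 * s; apply tR_of_mul htt; linear_combination -h)
    | (change s = 3 * t; apply tR_of_mul hst; linear_combination -h)
    | (change s = 3 * t; apply tR_of_mul hss; linear_combination -h)
    | (change t = 2 * s; apply tR_of_mul htt; linear_combination -h / 2)
    | (change s = 2 * t; apply tR_of_mul hss; linear_combination -h / 2)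
    | (change s ^ 2 - 3 * s * t + t ^ 2 = 0; apply tR_of_mul hst'; linear_combination -h)
    | (change s ^ 2 - 4 * s * t + t ^ 2 = 0; apply tR_of_mul hs; linear_combination -h)
    | (change s ^ 2 - 4 * s * t + t ^ 2 = 0; apply tR_of_mul ht; linear_combination -h)

theorem tR_clash (k k' : ℕ) (s t : ℝ) (hs : 0 < s) (ht : 0 < t) (h : tR k s t) (h' : tR k' s t) :
    k = k' := by
  have h1 : 0 < s * t := by positivity
  have h2 : 0 < s * s := by positivity
  have h3 : 0 < t * t := by positivity
  rcases k with _ | _ | _ | _ | _ | _ | k <;> rcases k' with _ | _ | _ | _ | _ | _ | k' <;>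
    simp only [tR] at h h' <;> first | rfl | (exfalso; first | exact h | exact h' | linarith | (subst h; nlinarith) | (subst h'; nlinarith))

theorem tE_eq (i j : ℕ) : tE i j = j * (j - 1) / 2 + i := rfl

theorem tE_le {a b i j : ℕ} (hb : b < 7) (hab : a < b) (hj : j < 7) 
    (h : b < j ∨ (b = j ∧ a ≤ i)) : tE a b ≤ tE i j := by
  rw [tE_eq, tE_eq]
  interval_cases b <;> interval_cases j <;> simp at h ⊢ <;> omega

theorem tE_next {j : ℕ} (hj : j < 7) : ∀ i, i + 1 = j → tE 0 (j + 1) = tE i j + 1 := by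
  intro i hi
  rw [tE_eq, tE_eq]
  interval_cases j <;> simp at hi ⊢ <;> omega

theorem tE_succ (i j : ℕ) : tE (i + 1) j = tE i j + 1 := by
  rw [tE_eq, tE_eq]; omega

theorem tLook_eq (cs p : ℕ) : tLook cs p = cs / 32 ^ p % 32 := rfl

theorem tLook_lt {cs x k p : ℕ} (hp : p < k) :
    tLook (cs + x * 32 ^ k) p = tLook cs p := by
  rw [tLook_eq, tLook_eq]
  obtain ⟨m, rfl⟩ : ∃ m, k = p + 1 + m := ⟨k - (p + 1), by omega⟩
  have : cs + x * 32 ^ (p + 1 + m) = cs + 32 ^ p * (32 * (x * 32 ^ m)) := by ring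
  rw [this, Nat.add_mul_div_left _ _ (by positivity), Nat.add_mul_mod_self_left]

theorem tLook_self {cs x k : ℕ} (hcs : cs < 32 ^ k) (hx : x < 32) :
    tLook (cs + x * 32 ^ k) k = x := by
  rw [tLook_eq, Nat.add_mul_div_right _ _ (by positivity), Nat.div_eq_of_lt hcs, zero_add,
    Nat.mod_eq_of_lt hx]

/-- Colour of an edge in either order. -/
def tCC (c : ℕ → ℕ) (a b : ℕ) : ℕ := if a < b then c (tE a b) else c (tE b a)

/-- The properties of the edge colouring by distances used in the search. -/
structure TV (c N : ℕ → ℕ) (σ : ℕ → ℝ) (S : Finset ℕ) : Prop where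
  N0 : N 0 = 0
  grow : ∀ k, c k ≤ N k
  N1 : ∀ k, N (k + 1) = if c k = N k then N k + 1 else N k
  card : S.card ≤ 3
  types : ∀ h i j, h < i → i < j → j < 7 →
    tCode (c (tE h i)) (c (tE h j)) (c (tE i j)) ∈ S
  pos : ∀ i j, i < j → j < 7 → 0 < σ (c (tE i j))
  cm : ∀ h l i j, h < l → l < i → i < j → j < 7 →
    tCM (σ (c (tE h l))) (σ (c (tE h i))) (σ (c (tE l i))) (σ (c (tE h j))) (σ (c (tE l j)))
      (σ (c (tE i j))) = 0
  g2 : ∀ i q s t j, q < i → i < j → t < s → s < j → j < 7 → s ≠ i → t ≠ i → q ≠ s → q ≠ t →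
    tCC c i s = c (tE i j) → tCC c i t = c (tE i j) → tCC c q s = c (tE q j) →
    tCC c q t = c (tE q j) → False
  sorted : ∀ h j, 0 < h → h < j - 1 → j < 7 → c (tE 0 h) = c (tE 0 j) →
    c (tE 0 (j - 1)) = c (tE 0 j)

def tInvT (S : Finset ℕ) (T : List ℕ) : Prop := T.Nodup ∧ ∀ x ∈ T, x ∈ S

def tInvF (σ : ℕ → ℝ) (F : List (ℕ × ℕ × ℕ)) : Prop :=
  ∀ f ∈ F, 0 < σ f.1 ∧ 0 < σ f.2.1 ∧ tR f.2.2 (σ f.1) (σ f.2.1)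

theorem tInvT_len {S : Finset ℕ} (hS : S.card ≤ 3) {T : List ℕ} (h : tInvT S T) :
    T.length ≤ 3 := by
  rw [← List.toFinset_card_of_nodup h.1]
  exact (Finset.card_le_card (fun x hx => h.2 x (List.mem_toFinset.1 hx))).trans hS

theorem tAddT_sound {S : Finset ℕ} (hS : S.card ≤ 3) (cs i j : ℕ) (k : List ℕ → Bool)
    (hs : List ℕ) : ∀ T, tInvT S T →
    (∀ h ∈ hs, tCode (tCl cs h i) (tCl cs h j) (tCl cs i j) ∈ S) →
    tAddT cs i j k hs T = true → ∃ T', tInvT S T' ∧ k T' = true := by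
  induction hs with
  | nil => intro T hT _ h; exact ⟨T, hT, h⟩
  | cons a hs ih =>
    intro T hT hm h
    rw [tAddT, tF_eq] at h
    have hm' := fun h hh => hm h (List.mem_cons_of_mem _ hh)
    have ha := hm a List.mem_cons_self
    generalize hx : tCode (tCl cs a i) (tCl cs a j) (tCl cs i j) = x at h ha
    cases hany : T.any (Nat.beq x) with
    | true =>
      rw [hany] at h
      exact ih T hT hm' h
    | false =>
      rw [hany] at h
      have hT' : tInvT S (x :: T) := by
        refine ⟨List.nodup_cons.2 ⟨fun hmem => ?_, hT.1⟩, ?_⟩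
        · rw [List.any_eq_false] at hany
          exact hany x hmem (by simp)
        · intro y hy
          rcases List.mem_cons.1 hy with rfl | hy
          · exact ha
          · exact hT.2 y hy
      have hlen := tInvT_len hS hT'
      simp only [List.length_cons] at hlen
      have : Nat.blt 2 T.length = false := by
        rw [← Bool.not_eq_true, Nat.blt_eq]; omega
      rw [this] at h
      exact ih _ hT' hm' h

theorem tMin_mem (a b : ℕ) : tMin a b = a ∨ tMin a b = b := by
  unfold tMin; cases Nat.ble a b <;> simp

theorem tMax_mem (a b : ℕ) : tMax a b = a ∨ tMax a b = b := by
  unfold tMax; cases Nat.ble a b <;> simp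

theorem tMin_le (a b : ℕ) : tMin a b ≤ a ∧ tMin a b ≤ b := by
  unfold tMin
  cases h : Nat.ble a b
  · rw [← Bool.not_eq_true, Nat.ble_eq] at h; simp; omega
  · rw [Nat.ble_eq] at h; simp; omega

theorem tMax_le (a b : ℕ) : a ≤ tMax a b ∧ b ≤ tMax a b := by
  unfold tMax
  cases h : Nat.ble a b
  · rw [← Bool.not_eq_true, Nat.ble_eq] at h; simp; omega
  · rw [Nat.ble_eq] at h; simp; omega

theorem tPut_sound {σ : ℕ → ℝ} {x y k : ℕ} {F : List (ℕ × ℕ × ℕ)}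
    {g : List (ℕ × ℕ × ℕ) → Bool} (hF : tInvF σ F) (hx : 0 < σ x) (hy : 0 < σ y)
    (hk : tR k (σ x) (σ y)) (h : tPut x y k F g = true) : ∃ F', tInvF σ F' ∧ g F' = true := by
  rw [tPut, tF_eq] at h
  have hc : F.any (tClash x y k) = false := by
    rw [List.any_eq_false]
    intro f hf hcl
    simp only [tClash, Bool.and_eq_true, Bool.not_eq_true', Nat.beq_eq] at hcl
    obtain ⟨h1, h2, h3⟩ := hcl
    obtain ⟨p1, p2, p3⟩ := hF f hf
    rw [h1, h2] at p3
    have := tR_clash _ _ _ _ hx hy p3 hk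
    rw [← Bool.not_eq_true, Nat.beq_eq] at h3
    exact h3 this
  rw [hc] at h
  cases hs : F.any (tSame x y k) with
  | true => rw [hs] at h; exact ⟨F, hF, h⟩
  | false =>
    rw [hs] at h
    refine ⟨_, ?_, h⟩
    intro f hf
    rcases List.mem_cons.1 hf with rfl | hf
    · exact ⟨hx, hy, hk⟩
    · exact hF f hf

theorem tSel_of {σ : ℕ → ℝ} {x y e : ℕ} (h : tIs x y e = true) :
    tSel (Nat.beq e y) (σ x) (σ y) = σ e := by
  unfold tIs at h
  unfold tSel
  cases hb : Nat.beq e y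
  · rw [hb, Bool.or_false, Nat.beq_eq] at h
    simp [h]
  · rw [Nat.beq_eq] at hb
    simp [hb]

theorem tFact_sound {σ : ℕ → ℝ} {e1 e2 e3 e4 e5 e6 : ℕ} {F : List (ℕ × ℕ × ℕ)}
    {g : List (ℕ × ℕ × ℕ) → Bool} (hF : tInvF σ F)
    (p1 : 0 < σ e1) (p2 : 0 < σ e2) (p3 : 0 < σ e3) (p4 : 0 < σ e4) (p5 : 0 < σ e5)
    (p6 : 0 < σ e6) (hcm : tCM (σ e1) (σ e2) (σ e3) (σ e4) (σ e5) (σ e6) = 0)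
    (h : tFact e1 e2 e3 e4 e5 e6 F g = true) : ∃ F', tInvF σ F' ∧ g F' = true := by
  unfold tFact at h
  simp only [tF_eq] at h
  have px : 0 < σ (tMin e1 (tMin e2 (tMin e3 (tMin e4 (tMin e5 e6))))) := by
    rcases tMin_mem e1 (tMin e2 (tMin e3 (tMin e4 (tMin e5 e6)))) with h | h <;> rw [h]
    · assumption
    rcases tMin_mem e2 (tMin e3 (tMin e4 (tMin e5 e6))) with h | h <;> rw [h]
    · assumption
    rcases tMin_mem e3 (tMin e4 (tMin e5 e6)) with h | h <;> rw [h]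
    · assumption
    rcases tMin_mem e4 (tMin e5 e6) with h | h <;> rw [h]
    · assumption
    rcases tMin_mem e5 e6 with h | h <;> rw [h] <;> assumption
  have py : 0 < σ (tMax e1 (tMax e2 (tMax e3 (tMax e4 (tMax e5 e6))))) := by
    rcases tMax_mem e1 (tMax e2 (tMax e3 (tMax e4 (tMax e5 e6)))) with h | h <;> rw [h]
    · assumption
    rcases tMax_mem e2 (tMax e3 (tMax e4 (tMax e5 e6))) with h | h <;> rw [h]
    · assumption
    rcases tMax_mem e3 (tMax e4 (tMax e5 e6)) with h | h <;> rw [h]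
    · assumption
    rcases tMax_mem e4 (tMax e5 e6) with h | h <;> rw [h]
    · assumption
    rcases tMax_mem e5 e6 with h | h <;> rw [h] <;> assumption
  have hxy : tMin e1 (tMin e2 (tMin e3 (tMin e4 (tMin e5 e6)))) ≠
      tMax e1 (tMax e2 (tMax e3 (tMax e4 (tMax e5 e6)))) := by
    intro heq
    have a1 := tMin_le e1 (tMin e2 (tMin e3 (tMin e4 (tMin e5 e6))))
    have a2 := tMin_le e2 (tMin e3 (tMin e4 (tMin e5 e6)))
    have a3 := tMin_le e3 (tMin e4 (tMin e5 e6))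
    have a4 := tMin_le e4 (tMin e5 e6)
    have a5 := tMin_le e5 e6
    have b1 := tMax_le e1 (tMax e2 (tMax e3 (tMax e4 (tMax e5 e6))))
    have b2 := tMax_le e2 (tMax e3 (tMax e4 (tMax e5 e6)))
    have b3 := tMax_le e3 (tMax e4 (tMax e5 e6))
    have b4 := tMax_le e4 (tMax e5 e6)
    have b5 := tMax_le e5 e6
    have c2 : e2 = e1 := by omega
    have c3 : e3 = e1 := by omega
    have c4 : e4 = e1 := by omega
    have c5 : e5 = e1 := by omega
    have c6 : e6 = e1 := by omega
    rw [c2, c3, c4, c5, c6, tCM] at hcm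
    have : 0 < σ e1 ^ 3 := by positivity
    linarith
  generalize tMin e1 (tMin e2 (tMin e3 (tMin e4 (tMin e5 e6)))) = x at *
  generalize tMax e1 (tMax e2 (tMax e3 (tMax e4 (tMax e5 e6)))) = y at *
  unfold tFact2 at h
  have hb : Nat.beq x y = false := by rw [← Bool.not_eq_true, Nat.beq_eq]; exact hxy
  rw [hb, Bool.false_or] at h
  cases hc : (tIs x y e1 && (tIs x y e2 && (tIs x y e3 && (tIs x y e4 &&
    (tIs x y e5 && tIs x y e6))))) with
  | false => rw [hc] at h; exact ⟨F, hF, h⟩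
  | true =>
    rw [hc] at h
    simp only [Bool.and_eq_true] at hc
    obtain ⟨h1, h2, h3, h4, h5, h6⟩ := hc
    refine tPut_sound hF px py ?_ h
    apply tKind_sound _ _ _ _ _ _ _ _ px py
    rw [tSel_of h1, tSel_of h2, tSel_of h3, tSel_of h4, tSel_of h5, tSel_of h6]
    exact hcm

theorem tAddF_sound {σ : ℕ → ℝ} (cs i j : ℕ) (g : List (ℕ × ℕ × ℕ) → Bool)
    (ps : List (ℕ × ℕ)) : ∀ F, tInvF σ F →
    (∀ p ∈ ps, 0 < σ (tCl cs p.1 p.2) ∧ 0 < σ (tCl cs p.1 i) ∧ 0 < σ (tCl cs p.2 i) ∧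
      0 < σ (tCl cs p.1 j) ∧ 0 < σ (tCl cs p.2 j) ∧ 0 < σ (tCl cs i j) ∧
      tCM (σ (tCl cs p.1 p.2)) (σ (tCl cs p.1 i)) (σ (tCl cs p.2 i)) (σ (tCl cs p.1 j))
        (σ (tCl cs p.2 j)) (σ (tCl cs i j)) = 0) →
    tAddF cs i j g ps F = true → ∃ F', tInvF σ F' ∧ g F' = true := by
  induction ps with
  | nil => intro F hF _ h; exact ⟨F, hF, h⟩
  | cons p ps ih =>
    intro F hF hm h
    rw [tAddF] at h
    obtain ⟨p1, p2, p3, p4, p5, p6, p7⟩ := hm p List.mem_cons_self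
    obtain ⟨F', hF', h'⟩ := tFact_sound hF p1 p2 p3 p4 p5 p6 p7 h
    exact ih F' hF' (fun q hq => hm q (List.mem_cons_of_mem _ hq)) h'

theorem tSearch_sound {c N : ℕ → ℕ} {σ : ℕ → ℝ} {S : Finset ℕ} (V : TV c N σ S) :
    ∀ n i j cs T F, i < j → cs < 32 ^ tE i j → (∀ p < tE i j, tLook cs p = c p) →
    tInvT S T → tInvF σ F → tSearch n i j cs (N (tE i j)) T F = true → False := by
  have hN : ∀ k, N k ≤ k := by
    intro k
    induction k with
    | zero => rw [V.N0]
    | succ k ih => rw [V.N1]; split <;> omega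
  intro n
  induction n with
  | zero => intro i j cs T F _ _ _ _ _ h; simp [tSearch] at h
  | succ n ih =>
    intro i j cs T F hij hcs hl hT hF h
    rw [tSearch, Bool.and_eq_true, Nat.blt_eq] at h
    obtain ⟨hj, h⟩ := h
    rw [List.all_eq_true] at h
    have h := h (c (tE i j)) (List.mem_range.2 (Nat.lt_succ_of_le (V.grow _)))
    simp only [tF_eq] at h
    have hE : tE i j < 32 := by
      rw [tE_eq]; interval_cases j <;> simp <;> omega
    have hc32 : c (tE i j) < 32 := lt_of_le_of_lt ((V.grow _).trans (hN _)) hE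
    have hcs' : Nat.add cs (Nat.mul (c (tE i j)) (Nat.pow 32 (tE i j))) =
      cs + c (tE i j) * 32 ^ tE i j := rfl
    rw [hcs'] at h
    have hlt : cs + c (tE i j) * 32 ^ tE i j < 32 ^ (tE i j + 1) := by
      rw [pow_succ]
      have : c (tE i j) * 32 ^ tE i j ≤ 31 * 32 ^ tE i j :=
        Nat.mul_le_mul_right _ (by omega)
      omega
    have hl' : ∀ p < tE i j + 1, tLook (cs + c (tE i j) * 32 ^ tE i j) p = c p := by
      intro p hp
      rcases Nat.lt_succ_iff_lt_or_eq.1 hp with hp | rfl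
      · rw [tLook_lt hp, hl p hp]
      · exact tLook_self hcs hc32
    generalize cs + c (tE i j) * 32 ^ tE i j = cs' at *
    have hcl : ∀ a b, a < b → (b < j ∨ (b = j ∧ a ≤ i)) → tCl cs' a b = c (tE a b) := by
      intro a b hab hb
      exact hl' _ (Nat.lt_succ_of_le (tE_le (by omega) hab hj hb))
    have hcc : ∀ a b, a ≠ b → a < j → b < j → tCs cs' a b = tCC c a b := by
      intro a b hab ha hb
      unfold tCs tCC
      by_cases hlt : a < b
      · rw [if_pos hlt, (iff_of_eq Nat.blt_eq).2 hlt]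
        exact hcl a b hlt (Or.inl hb)
      · rw [if_neg hlt]
        have : Nat.blt a b = false := by rw [← Bool.not_eq_true, Nat.blt_eq]; exact hlt
        rw [this]
        exact hcl b a (by omega) (Or.inl ha)
    have hnc : (bif Nat.beq (c (tE i j)) (N (tE i j)) then Nat.succ (N (tE i j))
        else N (tE i j)) = N (tE i j + 1) := by
      rw [V.N1]
      by_cases he : c (tE i j) = N (tE i j)
      · rw [if_pos he, (iff_of_eq Nat.beq_eq).2 he]; rfl
      · have : Nat.beq (c (tE i j)) (N (tE i j)) = false := by
          rw [← Bool.not_eq_true, Nat.beq_eq]; exact he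
        rw [if_neg he, this]; rfl
    rw [hnc, Bool.or_eq_true] at h
    rcases h with h | h
    · rw [Bool.and_eq_true, Nat.beq_eq, tS, List.any_eq_true] at h
      obtain ⟨rfl, x, hx, h⟩ := h
      simp only [Bool.and_eq_true, Nat.beq_eq, Nat.blt_eq, Bool.not_eq_true'] at h
      rw [List.mem_range, Nat.pred_eq_sub_one] at hx
      obtain ⟨h1, h2, h3⟩ := h
      rw [← Bool.not_eq_true, Nat.beq_eq, Nat.pred_eq_sub_one] at h3
      rw [hcl 0 x h1 (by omega), hcl 0 j (by omega) (by omega)] at h2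
      rw [hcl 0 (j - 1) (by omega) (by omega), hcl 0 j (by omega) (by omega)] at h3
      exact h3 (V.sorted x j h1 hx hj h2)
    · obtain ⟨T', hT', h⟩ := tAddT_sound V.card cs' i j _ (List.range i) T hT (by
        intro x hx
        rw [List.mem_range] at hx
        rw [hcl x i hx (by omega), hcl x j (by omega) (by omega), hcl i j hij (by omega)]
        exact V.types x i j hx hij hj) h
      rw [Bool.or_eq_true] at h
      rcases h with h | h
      · simp only [tG, List.any_eq_true, Bool.and_eq_true, Nat.beq_eq, Bool.not_eq_true',
          List.mem_range] at h
        obtain ⟨s, hs, hsi, h1, t, ht, hti, h2, q, hq, hqs, hqt, h3, h4⟩ := h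
        rw [← Bool.not_eq_true, Nat.beq_eq] at hsi hti hqs hqt
        rw [hcc i s (Ne.symm hsi) hij hs, hcl i j hij (by omega)] at h1
        rw [hcc i t (Ne.symm hti) hij (by omega), hcl i j hij (by omega)] at h2
        rw [hcc q s hqs (by omega) hs, hcl q j (by omega) (by omega)] at h3
        rw [hcc q t hqt (by omega) (by omega), hcl q j (by omega) (by omega)] at h4
        exact V.g2 i q s t j hq hij ht hs hj hsi hti hqs hqt h1 h2 h3 h4
      · obtain ⟨F', hF', h⟩ := tAddF_sound (σ := σ) cs' i j _ (tPairs i) F hF (by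
          intro p hp
          simp only [tPairs, List.mem_flatMap, List.mem_map, List.mem_range] at hp
          obtain ⟨l, hl, x, hx, rfl⟩ := hp
          dsimp only
          rw [hcl x l hx (by omega), hcl x i (by omega) (by omega), hcl l i hl (by omega),
            hcl x j (by omega) (by omega), hcl l j (by omega) (by omega), hcl i j hij (by omega)]
          exact ⟨V.pos _ _ hx (by omega), V.pos _ _ (by omega) (by omega),
            V.pos _ _ hl (by omega), V.pos _ _ (by omega) hj, V.pos _ _ (by omega) hj,
            V.pos _ _ hij hj, V.cm x l i j hx hl hij hj⟩) h
        by_cases hn : i + 1 = j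
        · have hb : Nat.beq (Nat.succ i) j = true := (iff_of_eq Nat.beq_eq).2 hn
          rw [hb, cond_true] at h
          have hE' := tE_next hj i hn
          rw [← hE'] at h hlt hl'
          exact ih 0 (j + 1) cs' T' F' (by omega) hlt hl' hT' hF' h
        · have hb : Nat.beq (Nat.succ i) j = false := by
            rw [← Bool.not_eq_true, Nat.beq_eq]; exact hn
          rw [hb, cond_false] at h
          rw [← tE_succ] at h hlt hl'
          exact ih (i + 1) j cs' T' F' (by omega) hlt hl' hT' hF' h

set_option maxRecDepth 100000 in
theorem tSearch_ok : tSearch 22 0 1 0 0 [] [] = true := by decide +kernel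

theorem TV_false {c N : ℕ → ℕ} {σ : ℕ → ℝ} {S : Finset ℕ} (V : TV c N σ S) : False := by
  refine tSearch_sound V 22 0 1 0 [] [] (by omega) (by simp [tE_eq]) (by simp [tE_eq])
    ⟨List.nodup_nil, by simp⟩ (by intro f hf; simp at hf) ?_
  have : N (tE 0 1) = 0 := V.N0
  rw [this]
  exact tSearch_ok

/-- Index of the first occurrence, colours in order of first occurrence. -/
def tKap (d : ℕ → ℝ) (r : ℝ) : ℕ :=
  open Classical in
  if h : ∃ p, d p = r then ((Finset.range (Nat.find h)).image d).card else 0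

def tN (d : ℕ → ℝ) (k : ℕ) : ℕ :=
  open Classical in ((Finset.range k).image d).card

theorem tN_mono (d : ℕ → ℝ) {k l : ℕ} (h : k ≤ l) : tN d k ≤ tN d l := by
  classical
  unfold tN
  exact Finset.card_le_card (Finset.image_subset_image (Finset.range_subset_range.2 h))

theorem tKap_spec (d : ℕ → ℝ) (k : ℕ) : ∃ m ≤ k, d m = d k ∧ tKap d (d k) = tN d m ∧
    tN d (m + 1) = tN d m + 1 ∧ ∀ p < m, d p ≠ d k := by
  classical
  have h : ∃ p, d p = d k := ⟨k, rfl⟩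
  have hmin : ∀ p < Nat.find h, d p ≠ d k := fun p hp => Nat.find_min h hp
  refine ⟨Nat.find h, Nat.find_le rfl, Nat.find_spec h, ?_, ?_, hmin⟩
  · unfold tKap tN; rw [dif_pos h]
  · unfold tN
    rw [Finset.range_add_one, Finset.image_insert, Finset.card_insert_of_notMem]
    intro hm
    obtain ⟨p, hp, hp'⟩ := Finset.mem_image.1 hm
    exact hmin p (Finset.mem_range.1 hp) (hp'.trans (Nat.find_spec h))

theorem tN_old (d : ℕ → ℝ) {m k : ℕ} (hm : m < k) (h : d m = d k) : tN d (k + 1) = tN d k := by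
  classical
  unfold tN
  rw [Finset.range_add_one, Finset.image_insert, Finset.insert_eq_of_mem]
  exact Finset.mem_image.2 ⟨m, Finset.mem_range.2 hm, h⟩

theorem tKap_grow (d : ℕ → ℝ) (k : ℕ) : tKap d (d k) ≤ tN d k ∧
    tN d (k + 1) = if tKap d (d k) = tN d k then tN d k + 1 else tN d k := by
  obtain ⟨m, hmk, hd, hK, hN, -⟩ := tKap_spec d k
  rcases hmk.lt_or_eq with hlt | rfl
  · have := tN_mono d (Nat.succ_le_of_lt hlt)
    rw [Nat.succ_eq_add_one, hN] at this
    rw [hK]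
    refine ⟨by omega, ?_⟩
    rw [if_neg (by omega), tN_old d hlt hd]
  · rw [hK]
    simpa using hN

theorem tKap_inj (d : ℕ → ℝ) {k l : ℕ} (h : tKap d (d k) = tKap d (d l)) : d k = d l := by
  obtain ⟨m, -, hd, hK, hN, -⟩ := tKap_spec d k
  obtain ⟨m', -, hd', hK', hN', -⟩ := tKap_spec d l
  rcases lt_trichotomy m m' with hlt | rfl | hlt
  · have := tN_mono d (Nat.succ_le_of_lt hlt)
    rw [Nat.succ_eq_add_one] at this
    omega
  · rw [← hd, hd']
  · have := tN_mono d (Nat.succ_le_of_lt hlt)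
    rw [Nat.succ_eq_add_one] at this
    omega

theorem t_dist_sq (x y : Plane) : dist x y ^ 2 = (x 0 - y 0) ^ 2 + (x 1 - y 1) ^ 2 := by
  rw [EuclideanSpace.dist_eq, Real.sq_sqrt (by positivity), Fin.sum_univ_two, Real.dist_eq,
    Real.dist_eq, sq_abs, sq_abs]

theorem t_cm (x y z w : Plane) : tCM (dist x y ^ 2) (dist x z ^ 2) (dist y z ^ 2) (dist x w ^ 2)
    (dist y w ^ 2) (dist z w ^ 2) = 0 := by
  simp only [t_dist_sq, tCM]
  ring

theorem t_circles {c₁ c₂ p₁ p₂ p : Plane} (hc : c₁ ≠ c₂) (h12 : p₁ ≠ p₂) (h1 : p ≠ p₁)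
    (h2 : p ≠ p₂) (a1 : dist c₁ p₁ = dist c₁ p) (a2 : dist c₁ p₂ = dist c₁ p)
    (b1 : dist c₂ p₁ = dist c₂ p) (b2 : dist c₂ p₂ = dist c₂ p) : False := by
  have := EuclideanGeometry.eq_of_dist_eq_of_dist_eq_of_finrank_eq_two (V := Plane) (P := Plane)
    (by simp) hc h12 (r₁ := dist c₁ p) (r₂ := dist c₂ p) (p := p)
    (by rw [dist_comm, a1]) (by rw [dist_comm, a2]) (dist_comm _ _)
    (by rw [dist_comm, b1]) (by rw [dist_comm, b2]) (dist_comm _ _)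
  tauto

theorem t_cong {a b c a' b' c' : Plane} (hab : a ≠ b) (hac : a ≠ c) (hbc : b ≠ c)
    (h : Cong {a, b, c} {a', b', c'}) (Γ : ℝ → ℕ) :
    Γ (dist a b) + (Γ (dist a c) + Γ (dist b c)) =
      Γ (dist a' b') + (Γ (dist a' c') + Γ (dist b' c')) := by
  obtain ⟨f, hf⟩ := h
  have ha : f a ∈ ({a', b', c'} : Set Plane) := hf ▸ ⟨a, by simp, rfl⟩
  have hb : f b ∈ ({a', b', c'} : Set Plane) := hf ▸ ⟨b, by simp, rfl⟩
  have hc : f c ∈ ({a', b', c'} : Set Plane) := hf ▸ ⟨c, by simp, rfl⟩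
  have nab : f a ≠ f b := f.injective.ne hab
  have nac : f a ≠ f c := f.injective.ne hac
  have nbc : f b ≠ f c := f.injective.ne hbc
  rw [← f.dist_eq a b, ← f.dist_eq a c, ← f.dist_eq b c]
  simp only [Set.mem_insert_iff, Set.mem_singleton_iff] at ha hb hc
  rcases ha with ha | ha | ha <;> rcases hb with hb | hb | hb <;> rcases hc with hc | hc | hc <;>
    rw [ha, hb] at nab <;> rw [ha, hc] at nac <;> rw [hb, hc] at nbc <;>
    first
    | exact absurd rfl nab
    | exact absurd rfl nac
    | exact absurd rfl nbc
    | (rw [ha, hb, hc, dist_comm b' a', dist_comm c' a', dist_comm c' b']; omega)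
    | (rw [ha, hb, hc, dist_comm b' a', dist_comm c' a']; omega)
    | (rw [ha, hb, hc, dist_comm b' a']; omega)
    | (rw [ha, hb, hc, dist_comm c' b']; omega)
    | (rw [ha, hb, hc, dist_comm c' a', dist_comm c' b']; omega)
    | (rw [ha, hb, hc])

theorem t_refl (s : Set Plane) : Cong s s := ⟨IsometryEquiv.refl _, Set.image_id s⟩

/-- Only few values of a symmetric code occur. -/
theorem t_codes (P : Set Plane) (h : numTriangles P ≤ 3) (Γ : ℝ → ℕ) :
    ∃ S : Finset ℕ, S.card ≤ 3 ∧ ∀ a b c, a ∈ P → b ∈ P → c ∈ P → a ≠ b → a ≠ c → b ≠ c →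
      Γ (dist a b) + (Γ (dist a c) + Γ (dist b c)) ∈ S := by
  set C : Set ℕ := {n | ∃ a b c, a ∈ P ∧ b ∈ P ∧ c ∈ P ∧ a ≠ b ∧ a ≠ c ∧ b ≠ c ∧
    n = Γ (dist a b) + (Γ (dist a c) + Γ (dist b c))} with hC
  have hch : ∀ n : ℕ, ∃ t : Set Plane, n ∈ C → ∃ a b c, a ∈ P ∧ b ∈ P ∧ c ∈ P ∧ a ≠ b ∧ a ≠ c ∧
      b ≠ c ∧ n = Γ (dist a b) + (Γ (dist a c) + Γ (dist b c)) ∧ t = {a, b, c} := by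
    intro n
    by_cases hn : n ∈ C
    · obtain ⟨a, b, c, h1, h2, h3, h4, h5, h6, h7⟩ := hn
      exact ⟨{a, b, c}, fun _ => ⟨a, b, c, h1, h2, h3, h4, h5, h6, h7, rfl⟩⟩
    · exact ⟨∅, fun h => absurd h hn⟩
  choose t ht using hch
  have hle : C.encard ≤ 3 := by
    refine le_trans ?_ h
    refine Set.encard_le_encard_of_injOn (f := fun n => {t' ∈ triplesOf P | Cong (t n) t'})
      ?_ ?_
    · intro n hn
      obtain ⟨a, b, c, h1, h2, h3, h4, h5, h6, h7, h8⟩ := ht n hn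
      exact ⟨t n, ⟨a, b, c, h1, h2, h3, h4, h5, h6, h8⟩, rfl⟩
    · intro n hn m hm heq
      obtain ⟨a, b, c, h1, h2, h3, h4, h5, h6, h7, h8⟩ := ht n hn
      obtain ⟨a', b', c', h1', h2', h3', h4', h5', h6', h7', h8'⟩ := ht m hm
      have hmem : t m ∈ {t' ∈ triplesOf P | Cong (t m) t'} :=
        ⟨⟨a', b', c', h1', h2', h3', h4', h5', h6', h8'⟩, t_refl _⟩
      have hmem' : t m ∈ {t' ∈ triplesOf P | Cong (t n) t'} := by
        have heq' : {t' ∈ triplesOf P | Cong (t n) t'} = {t' ∈ triplesOf P | Cong (t m) t'} := heq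
        rw [heq']; exact hmem
      have hcong := hmem'.2
      rw [h8, h8'] at hcong
      rw [h7, h7']
      exact t_cong h4 h5 h6 hcong Γ
  have hfin : C.Finite := Set.finite_of_encard_le_coe (k := 3) hle
  refine ⟨hfin.toFinset, ?_, ?_⟩
  · rw [hfin.encard_eq_coe_toFinset_card] at hle
    exact_mod_cast hle
  · intro a b c h1 h2 h3 h4 h5 h6
    rw [Set.Finite.mem_toFinset]
    exact ⟨a, b, c, h1, h2, h3, h4, h5, h6, rfl⟩

def tI (p : ℕ) : ℕ := [0, 0, 1, 0, 1, 2, 0, 1, 2, 3, 0, 1, 2, 3, 4, 0, 1, 2, 3, 4, 5].getD p 0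
def tJ (p : ℕ) : ℕ := [1, 2, 2, 3, 3, 3, 4, 4, 4, 4, 5, 5, 5, 5, 5, 6, 6, 6, 6, 6, 6].getD p 0

theorem tIJ : ∀ j < 7, ∀ i < j, tI (tE i j) = i ∧ tJ (tE i j) = j := by decide

theorem t_seven (P : Set Plane) (h : numTriangles P ≤ 3) (q : ℕ → Plane) (hq : ∀ i, q i ∈ P)
    (hinj : ∀ i j, i < 7 → j < 7 → i ≠ j → q i ≠ q j)
    (hmono : ∀ i j, i ≤ j → j < 7 → dist (q 0) (q i) ≤ dist (q 0) (q j)) : False := by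
  set d : ℕ → ℝ := fun p => dist (q (tI p)) (q (tJ p)) with hd
  have hdE : ∀ i j, i < j → j < 7 → d (tE i j) = dist (q i) (q j) := by
    intro i j hij hj
    obtain ⟨h1, h2⟩ := tIJ j hj i hij
    simp only [hd, h1, h2]
  obtain ⟨S, hS, hcode⟩ := t_codes P h (fun r => 4 ^ tKap d r)
  have hσ : ∃ σ : ℕ → ℝ, ∀ p, σ (tKap d (d p)) = d p ^ 2 := by
    have : ∀ n : ℕ, ∃ r : ℝ, ∀ p, tKap d (d p) = n → r = d p ^ 2 := by
      intro n
      by_cases hn : ∃ p, tKap d (d p) = n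
      · obtain ⟨p, hp⟩ := hn
        exact ⟨d p ^ 2, fun p' hp' => by rw [tKap_inj d (hp.trans hp'.symm)]⟩
      · exact ⟨0, fun p hp => absurd ⟨p, hp⟩ hn⟩
    choose σ hσ using this
    exact ⟨σ, fun p => hσ _ p rfl⟩
  obtain ⟨σ, hσ⟩ := hσ
  have hcc : ∀ a b, a ≠ b → a < 7 → b < 7 →
      tCC (fun p => tKap d (d p)) a b = tKap d (dist (q a) (q b)) := by
    intro a b hab ha hb
    unfold tCC
    split <;> dsimp only
    · rw [hdE a b (by omega) hb]
    · rw [hdE b a (by omega) ha, dist_comm]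
  have hke : ∀ a b a' b', a < b → b < 7 → a' ≠ b' → a' < 7 → b' < 7 →
      tKap d (dist (q a') (q b')) = tKap d (d (tE a b)) → dist (q a') (q b') = dist (q a) (q b) := by
    intro a b a' b' hab hb hab' ha' hb' he
    rcases lt_or_gt_of_ne hab' with hlt | hlt
    · rw [← hdE a' b' hlt hb'] at he ⊢
      rw [← hdE a b hab hb]
      exact tKap_inj d he
    · rw [dist_comm, ← hdE b' a' hlt ha'] at he ⊢
      rw [← hdE a b hab hb]
      exact tKap_inj d he
  refine TV_false (c := fun p => tKap d (d p)) (N := tN d) (σ := σ) (S := S)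
    ⟨by simp [tN], fun k => (tKap_grow d k).1, fun k => (tKap_grow d k).2, hS, ?_, ?_, ?_, ?_, ?_⟩
  · intro h i j hhi hij hj
    have := hcode (q h) (q i) (q j) (hq _) (hq _) (hq _) (hinj _ _ (by omega) (by omega) (by omega))
      (hinj _ _ (by omega) (by omega) (by omega)) (hinj _ _ (by omega) (by omega) (by omega))
    rw [← hdE h i hhi (by omega), ← hdE h j (by omega) hj, ← hdE i j hij hj] at this
    exact this
  · intro i j hij hj
    show 0 < σ (tKap d (d (tE i j)))
    rw [hσ, hdE i j hij hj]
    have := dist_pos.2 (hinj i j (by omega) hj (by omega))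
    positivity
  · intro h l i j hhl hli hij hj
    show tCM (σ (tKap d (d _))) (σ (tKap d (d _))) (σ (tKap d (d _))) (σ (tKap d (d _)))
      (σ (tKap d (d _))) (σ (tKap d (d _))) = 0
    simp only [hσ]
    rw [hdE h l hhl (by omega), hdE h i (by omega) (by omega), hdE l i hli (by omega),
      hdE h j (by omega) hj, hdE l j (by omega) hj, hdE i j hij hj]
    exact t_cm _ _ _ _
  · intro i r s t j hri hij hts hsj hj hsi hti hrs hrt h1 h2 h3 h4
    rw [hcc i s (by omega) (by omega) (by omega)] at h1
    rw [hcc i t (by omega) (by omega) (by omega)] at h2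
    rw [hcc r s (by omega) (by omega) (by omega)] at h3
    rw [hcc r t (by omega) (by omega) (by omega)] at h4
    have e1 := hke i j i s hij hj (by omega) (by omega) (by omega) h1
    have e2 := hke i j i t hij hj (by omega) (by omega) (by omega) h2
    have e3 := hke r j r s (by omega) hj (by omega) (by omega) (by omega) h3
    have e4 := hke r j r t (by omega) hj (by omega) (by omega) (by omega) h4
    exact t_circles (hinj i r (by omega) (by omega) (by omega))
      (hinj s t (by omega) (by omega) (by omega)) (hinj j s (by omega) (by omega) (by omega))
      (hinj j t (by omega) (by omega) (by omega)) e1 e2 e3 e4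
  · intro h j h0 hhj hj he
    have e1 := tKap_inj d he
    rw [hdE 0 h h0 (by omega), hdE 0 j (by omega) hj] at e1
    have m1 := hmono h (j - 1) (by omega) (by omega)
    have m2 := hmono (j - 1) j (by omega) hj
    have : d (tE 0 (j - 1)) = d (tE 0 j) := by
      rw [hdE 0 (j - 1) (by omega) (by omega), hdE 0 j (by omega) hj]
      linarith
    show tKap d (d _) = tKap d (d _)
    rw [this]

/-- Any set of points in the plane spanning at most 3 distinct triangles
contains at most 6 points. -/
theorem at_most_three_triangles_implies_at_most_six_points
    (P : Set Plane) (h : numTriangles P ≤ 3) : P.encard ≤ 6 := by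
  by_contra hP
  have h7 : (7 : ℕ∞) ≤ P.encard := by
    have := Order.add_one_le_of_lt (not_le.1 hP)
    have e : (6 : ℕ∞) + 1 = 7 := by norm_num
    rwa [e] at this
  obtain ⟨t, htP, ht⟩ := Set.exists_subset_encard_eq h7
  have hfin : t.Finite := Set.finite_of_encard_eq_coe (k := 7) ht
  have hcard : hfin.toFinset.card = 7 := by
    rw [hfin.encard_eq_coe_toFinset_card] at ht
    exact_mod_cast ht
  let e : Fin 7 ≃ hfin.toFinset := (Finset.equivFinOfCardEq hcard).symm
  let f : Fin 7 → Plane := fun k => (e k : Plane)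
  have hf : Function.Injective f := fun a b hab => e.injective (Subtype.ext hab)
  have hfP : ∀ k, f k ∈ P := fun k => htP (hfin.mem_toFinset.1 (e k).2)
  let τ := Tuple.sort (fun k => dist (f 0) (f k))
  have hτ : Monotone ((fun k => dist (f 0) (f k)) ∘ τ) := Tuple.monotone_sort _
  have h0 : f (τ 0) = f 0 := by
    have := hτ (Fin.zero_le (τ.symm 0))
    simp only [Function.comp_apply, Equiv.apply_symm_apply, dist_self] at this
    exact (dist_le_zero.1 this).symm
  have hval : ∀ i (hi : i < 7), Fin.ofNat 7 i = ⟨i, hi⟩ := by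
    intro i hi
    ext
    simp [Nat.mod_eq_of_lt hi]
  refine t_seven P h (fun n => f (τ (Fin.ofNat 7 n))) (fun i => hfP _) ?_ ?_
  · intro i j hi hj hij heq
    have := τ.injective (hf heq)
    rw [hval i hi, hval j hj, Fin.mk.injEq] at this
    exact hij this
  · intro i j hij hj
    have := hτ (a := Fin.ofNat 7 i) (b := Fin.ofNat 7 j) (by
      rw [hval i (by omega), hval j hj]; exact hij)
    simp only [Function.comp_apply] at this
    have e0 : f (τ (Fin.ofNat 7 0)) = f 0 := h0
    simp only [e0]
    exact this
end
end

section
/- If a set of exactly 6 points in the Euclidean plane spans at most 3 distinct triangles, then the 6 points are the vertex set of a regular hexagon. -/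
open Real EuclideanGeometry

noncomputable section

/-- A regular hexagon: six equally spaced points on a circle. -/
def IsRegularHexagon (S : Set Plane) : Prop :=
  ∃ (c : Plane) (r φ : ℝ), 0 < r ∧
    S = Set.range fun k : Fin 6 =>
      c + r • pt (Real.cos (φ + 2 * π * k / 6)) (Real.sin (φ + 2 * π * k / 6))


/-! ## The search procedure -/

/-- A colored edge `(i, j, color)`. -/
abbrev CEdge := ℕ × ℕ × ℕ

/-- Step of the search: edge `(i, j)`, its code `6 * i + j`, new triangles, new quadruples, and
new `K_{2,3}` tuples. -/
abbrev Step := ℕ × ℕ × ℕ × List (ℕ × ℕ × ℕ) × List (ℕ × ℕ × ℕ × ℕ) × List (ℕ × ℕ × ℕ × ℕ × ℕ)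

/-- Look up the color of edge `(i, j)` and continue with it. -/
def getK (L : List CEdge) (i j : ℕ) (k : ℕ → Bool) : Bool :=
  List.rec (motive := fun _ => Bool) false
    (fun h _ ih => Prod.rec (fun i' h' => Prod.rec (fun j' c =>
      cond (Nat.beq j' j) (cond (Nat.beq i' i) (k c) ih) ih) h') h) L

/-- Symmetric lookup. -/
def getS (L : List CEdge) (i j : ℕ) (k : ℕ → Bool) : Bool :=
  cond (Nat.ble i j) (getK L i j k) (getK L j i k)

/-- Equality of two triples of colors as multisets. -/
def same (x y z : ℕ) : ℕ × ℕ × ℕ → Bool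
  | (x', y', z') =>
    cond (Nat.beq x x') (cond (Nat.beq y y') (Nat.beq z z') (cond (Nat.beq y z') (Nat.beq z y') false))
    (cond (Nat.beq x y') (cond (Nat.beq y x') (Nat.beq z z') (cond (Nat.beq y z') (Nat.beq z x') false))
    (cond (Nat.beq x z') (cond (Nat.beq y x') (Nat.beq z y') (cond (Nat.beq y y') (Nat.beq z x') false))
    false))

/-- Does the list contain the given triple type. -/
def memT (x y z : ℕ) : List (ℕ × ℕ × ℕ) → Bool
  | [] => false
  | t :: T => cond (same x y z t) true (memT x y z T)

/-- Triple types excluded by assumption: none for `lo = 0`, equilateral triangles for `lo = 1`,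
isosceles triangles for `lo = 2`. -/
def forb (lo x y z : ℕ) : Bool :=
  match lo with
  | 0 => false
  | 1 => cond (Nat.beq x y) (Nat.beq x z) false
  | _ => cond (Nat.beq x y) true (cond (Nat.beq x z) true (Nat.beq y z))

/-- Add a triple type, succeeding at once if there are already three others. -/
def pushT (x y z : ℕ) (T : List (ℕ × ℕ × ℕ)) (k : List (ℕ × ℕ × ℕ) → Bool) : Bool :=
  cond (memT x y z T) (k T)
    (match T with
      | _ :: _ :: _ :: _ => true
      | T => k ((x, y, z) :: T))

/-- Add all the new triple types. -/
def addT (lo : ℕ) (L : List CEdge) : List (ℕ × ℕ × ℕ) → List (ℕ × ℕ × ℕ) →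
    (List (ℕ × ℕ × ℕ) → Bool) → Bool
  | [], T, k => k T
  | (a, b, c) :: ts, T, k =>
    getS L a b fun x => getS L a c fun y => getS L b c fun z =>
      cond (forb lo x y z) true (pushT x y z T fun T' => addT lo L ts T' k)

/-- Conjunction of equalities of `x` with four others. -/
def eq5 (x a b c d : ℕ) : Bool :=
  cond (Nat.beq x a) (cond (Nat.beq x b) (cond (Nat.beq x c) (Nat.beq x d) false) false) false

/-- Two groups of three equal colors. -/
def eq33 (x a b y c d : ℕ) : Bool :=
  cond (Nat.beq x a) (cond (Nat.beq x b) (cond (Nat.beq y c) (Nat.beq y d) false) false) false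

/-- A group of four equal colors and a group of two equal ones. -/
def eq42 (x a b c y d : ℕ) : Bool :=
  cond (Nat.beq x a) (cond (Nat.beq x b) (cond (Nat.beq x c) (Nat.beq y d) false) false) false

/-- Analyse a quadruple. `k x y t` is called with a relation found, `k0` if nothing is found. -/
def quadK (ab ac ad bc bd cd : ℕ) (k : ℕ → ℕ → ℕ → Bool) (k0 : Bool) : Bool :=
  cond (eq5 ac ad bc bd cd) (k ac ab 0) <|
  cond (eq5 ab ad bc bd cd) (k ab ac 0) <|
  cond (eq5 ab ac bc bd cd) (k ab ad 0) <|
  cond (eq5 ab ac ad bd cd) (k ab bc 0) <|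
  cond (eq5 ab ac ad bc cd) (k ab bd 0) <|
  cond (eq5 ab ac ad bc bd) (k ab cd 0) <|
  cond (eq33 ab ac ad bc bd cd) (k ab bc 0) <|
  cond (eq33 ab bc bd ac ad cd) (k ab ac 0) <|
  cond (eq33 ac bc cd ab ad bd) (k ac ab 0) <|
  cond (eq33 ad bd cd ab ac bc) (k ad ab 0) <|
  cond (eq42 ac ad bc bd ab cd) (k ac ab 1) <|
  cond (eq42 ab ad bc cd ac bd) (k ab ac 1) <|
  cond (eq42 ab ac bd cd ad bc) (k ab ad 1) <|
  cond (eq33 ab bc cd ac ad bd) (k ab ac 2) <|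
  cond (eq33 ab bd cd ad ac bc) (k ab ad 2) <|
  cond (eq33 ac bc bd ab ad cd) (k ac ab 2) <|
  cond (eq33 ac cd bd ad ab bc) (k ac ad 2) <|
  cond (eq33 ad bd bc ab ac cd) (k ad ab 2) <|
  cond (eq33 ad cd bc ac ab bd) (k ad ac 2) k0

/-- Is the relation `(x, y, t)` contradictory with one in the list. -/
def conflR (x y t : ℕ) : List (ℕ × ℕ × ℕ) → Bool
  | [] => false
  | (x', y', t') :: R =>
    cond (Nat.beq x x')
      (cond (Nat.beq y y') (cond (Nat.beq t t') (conflR x y t R) true) (conflR x y t R))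
      (cond (Nat.beq x y')
        (cond (Nat.beq y x') (cond (Nat.beq t t') (cond (Nat.beq t 2) (conflR x y t R) true) true)
          (conflR x y t R))
        (conflR x y t R))

/-- Add the relations from the new quadruples. -/
def addR (L : List CEdge) : List (ℕ × ℕ × ℕ × ℕ) → List (ℕ × ℕ × ℕ) →
    (List (ℕ × ℕ × ℕ) → Bool) → Bool
  | [], R, k => k R
  | (a, b, c, d) :: qs, R, k =>
    getS L a b fun ab => getS L a c fun ac => getS L a d fun ad =>
    getS L b c fun bc => getS L b d fun bd => getS L c d fun cd =>
      quadK ab ac ad bc bd cd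
        (fun x y t => cond (Nat.beq x y) true
          (cond (conflR x y t R) true (addR L qs ((x, y, t) :: R) k)))
        (addR L qs R k)

/-- Is there a forbidden `K_{2,3}`. -/
def hasK23 (L : List CEdge) : List (ℕ × ℕ × ℕ × ℕ × ℕ) → Bool
  | [] => false
  | (u, v, x, y, z) :: ts =>
    cond
      (getS L u x fun c => getS L u y fun c' => cond (Nat.beq c c')
        (getS L u z fun c'' => cond (Nat.beq c c'')
          (getS L v x fun e => getS L v y fun e' => cond (Nat.beq e e')
            (getS L v z fun e'' => Nat.beq e e'') false) false) false)
      true (hasK23 L ts)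

/-- Is the final coloring that of a hexagon with the given labelling. -/
def isHex (L : List CEdge) : List ℕ → Bool
  | [b, c, d, e, f] => cond (Nat.ble b c)
    (getS L 0 b fun x => getS L 0 c fun x1 => cond (Nat.beq x x1)
      (getS L b c fun x2 => cond (Nat.beq x x2)
      (getS L d e fun x3 => cond (Nat.beq x x3)
      (getS L d f fun x4 => cond (Nat.beq x x4)
      (getS L e f fun x5 => cond (Nat.beq x x5)
      (getS L 0 d fun y => getS L 0 e fun y1 => cond (Nat.beq y y1)
      (getS L b d fun y2 => cond (Nat.beq y y2)
      (getS L b f fun y3 => cond (Nat.beq y y3)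
      (getS L c e fun y4 => cond (Nat.beq y y4)
      (getS L c f fun y5 => cond (Nat.beq y y5)
      (getS L 0 f fun z => getS L b e fun z1 => cond (Nat.beq z z1)
      (getS L c d fun z2 => Nat.beq z z2) false)
      false) false) false) false) false) false) false) false) false) false) false
  | _ => false

/-- Some labelling makes the coloring that of a hexagon. -/
def anyHex (L : List CEdge) : List (List ℕ) → Bool
  | [] => false
  | s :: ss => cond (isHex L s) true (anyHex L ss)

/-- All labellings. -/
def labellings : List (List ℕ) := List.permutations' [1, 2, 3, 4, 5]

/-- Check all the candidate colors. -/
def allK : List ℕ → (ℕ → Bool) → Bool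
  | [], _ => true
  | c :: cs, k => cond (k c) (allK cs k) false

/-- The search over all colorings. -/
def search (lo : ℕ) : List Step → List CEdge → List ℕ → List (ℕ × ℕ × ℕ) → List (ℕ × ℕ × ℕ) → Bool
  | [], L, _, _, _ => anyHex L labellings
  | (i, j, e, ts, qs, ks) :: rest, L, cs, T, R =>
    cond (allK cs fun z =>
        addT lo ((i, j, z) :: L) ts T fun T' => addR ((i, j, z) :: L) qs R fun R' =>
          cond (hasK23 ((i, j, z) :: L) ks) true (search lo rest ((i, j, z) :: L) cs T' R'))
      (addT lo ((i, j, e) :: L) ts T fun T' => addR ((i, j, e) :: L) qs R fun R' =>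
          cond (hasK23 ((i, j, e) :: L) ks) true (search lo rest ((i, j, e) :: L) (e :: cs) T' R'))
      false

/-- Tuples `(u, v, x, y, z)` among the first five vertices. -/
def tuplesK23_5 : List (ℕ × ℕ × ℕ × ℕ × ℕ) :=
  [(0, 1, 2, 3, 4), (0, 2, 1, 3, 4), (0, 3, 1, 2, 4), (0, 4, 1, 2, 3), (1, 2, 0, 3, 4), (1, 3,
   0, 2, 4), (1, 4, 0, 2, 3), (2, 3, 0, 1, 4), (2, 4, 0, 1, 3), (3, 4, 0, 1, 2)]

/-- Tuples `(u, v, x, y, z)` among the six vertices. -/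
def tuplesK23_6 : List (ℕ × ℕ × ℕ × ℕ × ℕ) :=
  [(0, 1, 2, 3, 4), (0, 1, 2, 3, 5), (0, 1, 2, 4, 5), (0, 1, 3, 4, 5), (0, 2, 1, 3, 4), (0, 2,
   1, 3, 5), (0, 2, 1, 4, 5), (0, 2, 3, 4, 5), (0, 3, 1, 2, 4), (0, 3, 1, 2, 5), (0, 3, 1, 4,
   5), (0, 3, 2, 4, 5), (0, 4, 1, 2, 3), (0, 4, 1, 2, 5), (0, 4, 1, 3, 5), (0, 4, 2, 3, 5), (0,
   5, 1, 2, 3), (0, 5, 1, 2, 4), (0, 5, 1, 3, 4), (0, 5, 2, 3, 4), (1, 2, 0, 3, 4), (1, 2, 0,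
   3, 5), (1, 2, 0, 4, 5), (1, 2, 3, 4, 5), (1, 3, 0, 2, 4), (1, 3, 0, 2, 5), (1, 3, 0, 4, 5),
   (1, 3, 2, 4, 5), (1, 4, 0, 2, 3), (1, 4, 0, 2, 5), (1, 4, 0, 3, 5), (1, 4, 2, 3, 5), (1, 5,
   0, 2, 3), (1, 5, 0, 2, 4), (1, 5, 0, 3, 4), (1, 5, 2, 3, 4), (2, 3, 0, 1, 4), (2, 3, 0, 1,
   5), (2, 3, 0, 4, 5), (2, 3, 1, 4, 5), (2, 4, 0, 1, 3), (2, 4, 0, 1, 5), (2, 4, 0, 3, 5), (2,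
   4, 1, 3, 5), (2, 5, 0, 1, 3), (2, 5, 0, 1, 4), (2, 5, 0, 3, 4), (2, 5, 1, 3, 4), (3, 4, 0,
   1, 2), (3, 4, 0, 1, 5), (3, 4, 0, 2, 5), (3, 4, 1, 2, 5), (3, 5, 0, 1, 2), (3, 5, 0, 1, 4),
   (3, 5, 0, 2, 4), (3, 5, 1, 2, 4), (4, 5, 0, 1, 2), (4, 5, 0, 1, 3), (4, 5, 0, 2, 3), (4, 5,
   1, 2, 3)]

/-- The order in which the edges are coloured, with the checks to run after each edge. -/
def allSteps : List Step := [
  (0, 3, 3, [], [], []),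
  (1, 3, 9, [(0, 1, 3)], [], []),
  (2, 3, 15, [(0, 2, 3), (1, 2, 3)], [(0, 1, 2, 3)], []),
  (0, 4, 4, [], [], []),
  (1, 4, 10, [(0, 1, 4)], [], []),
  (2, 4, 16, [(0, 2, 4), (1, 2, 4)], [(0, 1, 2, 4)], []),
  (3, 4, 22, [(0, 3, 4), (1, 3, 4), (2, 3, 4)], [(0, 1, 3, 4), (0, 2, 3, 4), (1, 2, 3, 4)], tuplesK23_5),
  (0, 5, 5, [], [], []),
  (1, 5, 11, [(0, 1, 5)], [], []),
  (2, 5, 17, [(0, 2, 5), (1, 2, 5)], [(0, 1, 2, 5)], []),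
  (3, 5, 23, [(0, 3, 5), (1, 3, 5), (2, 3, 5)], [(0, 1, 3, 5), (0, 2, 3, 5), (1, 2, 3, 5)], []),
  (4, 5, 29, [(0, 4, 5), (1, 4, 5), (2, 4, 5), (3, 4, 5)], [(0, 1, 4, 5), (0, 2, 4, 5), (1, 2, 4, 5), (0, 3, 4, 5), (1, 3, 4, 5), (2, 3, 4, 5)], tuplesK23_6)]

theorem search_equilateral :
    search 0 allSteps [(1, 2, 1), (0, 2, 1), (0, 1, 1)] [1] [(1, 1, 1)] [] = true := by
  decide +kernel

theorem search_isosceles :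
    search 1 allSteps [(1, 2, 8), (0, 2, 1), (0, 1, 1)] [8, 1] [(1, 1, 8)] [] = true := by
  decide +kernel

theorem search_scalene :
    search 2 allSteps [(1, 2, 8), (0, 2, 2), (0, 1, 1)] [8, 2, 1] [(1, 2, 8)] [] = true := by
  decide +kernel


/-! ## Soundness of the search -/

/-- The Gram determinant (up to a factor) of four points, from the squared distances. -/
def cm (ab ac ad bc bd cd : ℝ) : ℝ :=
  2 * ab * (2 * ac * (2 * ad) - (ac + ad - cd) ^ 2)
    - (ab + ac - bc) * ((ab + ac - bc) * (2 * ad) - (ac + ad - cd) * (ab + ad - bd))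
    + (ab + ad - bd) * ((ab + ac - bc) * (ac + ad - cd) - 2 * ac * (ab + ad - bd))

/-- The relations between two squared distances. -/
def SqRel (t : ℕ) (u v : ℝ) : Prop :=
  match t with
  | 0 => v = 3 * u
  | 1 => v = 2 * u
  | _ => u ^ 2 + v ^ 2 = 3 * u * v

/-- The multisets of squared side lengths of triangles. -/
def IsTri (d : ℕ → ℕ → ℝ) (m : Multiset ℝ) : Prop :=
  ∃ i j k : ℕ, i < 6 ∧ j < 6 ∧ k < 6 ∧ i ≠ j ∧ i ≠ k ∧ j ≠ k ∧ m = {d i j, d i k, d j k}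

/-- What is needed about the squared distances. -/
structure Geo (d : ℕ → ℕ → ℝ) : Prop where
  symm : ∀ i j, d i j = d j i
  pos : ∀ i j, i < 6 → j < 6 → i ≠ j → 0 < d i j
  cm : ∀ a b c e, cm (d a b) (d a c) (d a e) (d b c) (d b e) (d c e) = 0
  k23 : ∀ u v x y z, u < 6 → v < 6 → x < 6 → y < 6 → z < 6 → u ≠ v → x ≠ y → x ≠ z → y ≠ z →
    d u x = d u y → d u x = d u z → d v x = d v y → d v x = d v z → False
  tri : ∀ l : List (Multiset ℝ), l.Nodup → (∀ m ∈ l, IsTri d m) → l.length ≤ 3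

/-- The squared distances are those of a hexagon, up to labelling. -/
def HexPat (d : ℕ → ℕ → ℝ) : Prop :=
  ∃ b c e f g : ℕ, List.Perm [b, c, e, f, g] [1, 2, 3, 4, 5] ∧
    d 0 b = d 0 c ∧ d 0 b = d b c ∧ d 0 b = d e f ∧ d 0 b = d e g ∧ d 0 b = d f g ∧
    d 0 e = d 0 f ∧ d 0 e = d b e ∧ d 0 e = d b g ∧ d 0 e = d c f ∧ d 0 e = d c g ∧
    d 0 g = d b f ∧ d 0 g = d c e

/-- The value of a color. -/
def val (d : ℕ → ℕ → ℝ) (c : ℕ) : ℝ := d (c / 6) (c % 6)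

theorem cond_elim {b A B : Bool} (h : cond b A B = true) :
    (b = true ∧ A = true) ∨ (b = false ∧ B = true) := by
  cases b
  · exact Or.inr ⟨rfl, h⟩
  · exact Or.inl ⟨rfl, h⟩

theorem cond_and {b A : Bool} (h : cond b A false = true) : b = true ∧ A = true := by
  cases b
  · exact absurd h (by simp)
  · exact ⟨rfl, h⟩

theorem beq_t {a b : ℕ} (h : Nat.beq a b = true) : a = b := Nat.eq_of_beq_eq_true h

theorem beq_f {a b : ℕ} (h : Nat.beq a b = false) : a ≠ b := Nat.ne_of_beq_eq_false h

/-- Validity of the list of colored edges. -/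
def LInv (d : ℕ → ℕ → ℝ) (cs : List ℕ) (L : List CEdge) : Prop :=
  ∀ h ∈ L, h.2.2 ∈ cs ∧ val d h.2.2 = d h.1 h.2.1

/-- Validity of the list of colors. -/
def CInv (d : ℕ → ℕ → ℝ) (cs : List ℕ) : Prop :=
  (∀ x ∈ cs, ∀ y ∈ cs, val d x = val d y → x = y) ∧ ∀ x ∈ cs, 0 < val d x

/-- The multiset of values of a triple of colors. -/
def mset (d : ℕ → ℕ → ℝ) (t : ℕ × ℕ × ℕ) : Multiset ℝ := {val d t.1, val d t.2.1, val d t.2.2}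

/-- Validity of the list of triple types. -/
def TInv (d : ℕ → ℕ → ℝ) (cs : List ℕ) (T : List (ℕ × ℕ × ℕ)) : Prop :=
  (∀ t ∈ T, t.1 ∈ cs ∧ t.2.1 ∈ cs ∧ t.2.2 ∈ cs) ∧ (∀ t ∈ T, IsTri d (mset d t)) ∧
    (T.map (mset d)).Nodup

/-- Validity of the list of relations. -/
def RInv (d : ℕ → ℕ → ℝ) (cs : List ℕ) (R : List (ℕ × ℕ × ℕ)) : Prop :=
  ∀ r ∈ R, r.1 ∈ cs ∧ r.2.1 ∈ cs ∧ r.2.2 < 3 ∧ SqRel r.2.2 (val d r.1) (val d r.2.1)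

theorem getK_sound {d : ℕ → ℕ → ℝ} {cs : List ℕ} {L : List CEdge} (hL : LInv d cs L)
    {i j : ℕ} {k : ℕ → Bool} (h : getK L i j k = true) :
    ∃ c ∈ cs, val d c = d i j ∧ k c = true := by
  induction L with
  | nil => exact absurd h (by simp [getK])
  | cons e L ih =>
    obtain ⟨i', j', c⟩ := e
    have hL' : LInv d cs L := fun x hx => hL x (List.mem_cons_of_mem _ hx)
    have h' : cond (Nat.beq j' j) (cond (Nat.beq i' i) (k c) (getK L i j k)) (getK L i j k)
      = true := h
    rcases cond_elim h' with ⟨h1, h2⟩ | ⟨_, h2⟩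
    · rcases cond_elim h2 with ⟨h3, h4⟩ | ⟨_, h4⟩
      · have := hL (i', j', c) List.mem_cons_self
        refine ⟨c, this.1, ?_, h4⟩
        rw [this.2, ← beq_t h1, ← beq_t h3]
      · exact ih hL' h4
    · exact ih hL' h2

theorem getS_sound {d : ℕ → ℕ → ℝ} (hd : Geo d) {cs : List ℕ} {L : List CEdge}
    (hL : LInv d cs L) {i j : ℕ} {k : ℕ → Bool} (h : getS L i j k = true) :
    ∃ c ∈ cs, val d c = d i j ∧ k c = true := by
  rcases cond_elim h with ⟨_, h2⟩ | ⟨_, h2⟩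
  · exact getK_sound hL h2
  · rw [hd.symm]
    exact getK_sound hL h2

theorem triple_eq {a b c a' b' c' : ℝ} (h : ({a, b, c} : Multiset ℝ) = {a', b', c'}) :
    (a = a' ∧ b = b' ∧ c = c') ∨ (a = a' ∧ b = c' ∧ c = b') ∨ (a = b' ∧ b = a' ∧ c = c') ∨
    (a = b' ∧ b = c' ∧ c = a') ∨ (a = c' ∧ b = a' ∧ c = b') ∨ (a = c' ∧ b = b' ∧ c = a') := by
  have pair : ∀ u v u' v' : ℝ, ({u, v} : Multiset ℝ) = {u', v'} →
      (u = u' ∧ v = v') ∨ (u = v' ∧ v = u') := by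
    intro u v u' v' h
    have hu : u ∈ ({u', v'} : Multiset ℝ) := by rw [← h]; simp
    simp only [Multiset.insert_eq_cons, Multiset.mem_cons, Multiset.mem_singleton] at hu
    rcases hu with rfl | rfl
    · left
      simpa using h
    · right
      rw [Multiset.pair_comm u' u] at h
      simpa using h
  have ha : a ∈ ({a', b', c'} : Multiset ℝ) := by rw [← h]; simp
  simp only [Multiset.insert_eq_cons, Multiset.mem_cons, Multiset.mem_singleton] at ha
  rcases ha with rfl | rfl | rfl
  · have := pair b c b' c' (by simpa using h)
    tauto
  · have h2 : ({a, b, c} : Multiset ℝ) = {a, a', c'} := by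
      rw [h]; simp only [Multiset.insert_eq_cons]; rw [Multiset.cons_swap]
    have := pair b c a' c' (by simpa using h2)
    tauto
  · have h2 : ({a, b, c} : Multiset ℝ) = {a, a', b'} := by
      rw [h]; simp only [Multiset.insert_eq_cons]
      rw [← Multiset.cons_zero, Multiset.cons_swap b' a, Multiset.cons_swap a' a]
      rfl
    have := pair b c a' b' (by simpa using h2)
    tauto

theorem beq_rfl' (a : ℕ) : Nat.beq a a = true := Nat.beq_refl a

theorem same_of_mset {d : ℕ → ℕ → ℝ} {cs : List ℕ} (hc : CInv d cs) {x y z : ℕ}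
    {t : ℕ × ℕ × ℕ} (hx : x ∈ cs) (hy : y ∈ cs) (hz : z ∈ cs)
    (ht : t.1 ∈ cs ∧ t.2.1 ∈ cs ∧ t.2.2 ∈ cs) (h : mset d (x, y, z) = mset d t) :
    same x y z t = true := by
  obtain ⟨a, b, c⟩ := t
  obtain ⟨ha, hb, hc'⟩ := ht
  have key := hc.1
  have e : ∀ u v : ℕ, Nat.beq u v = decide (u = v) := by
    intro u v
    cases hb : Nat.beq u v with
    | true => exact (decide_eq_true (beq_t hb)).symm
    | false => exact (decide_eq_false (beq_f hb)).symm
  rcases triple_eq h with ⟨h1, h2, h3⟩ | ⟨h1, h2, h3⟩ | ⟨h1, h2, h3⟩ | ⟨h1, h2, h3⟩ |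
      ⟨h1, h2, h3⟩ | ⟨h1, h2, h3⟩ <;>
    simp only at h1 h2 h3 <;>
    (have h1' := key _ (by assumption) _ (by assumption) h1
     have h2' := key _ (by assumption) _ (by assumption) h2
     have h3' := key _ (by assumption) _ (by assumption) h3
     subst h1' h2' h3'
     simp only [same, e, Bool.cond_decide]
     clear * -
     grind)

theorem memT_false {d : ℕ → ℕ → ℝ} {cs : List ℕ} (hc : CInv d cs) {x y z : ℕ}
    (hx : x ∈ cs) (hy : y ∈ cs) (hz : z ∈ cs) {T : List (ℕ × ℕ × ℕ)}
    (hT : ∀ t ∈ T, t.1 ∈ cs ∧ t.2.1 ∈ cs ∧ t.2.2 ∈ cs) (h : memT x y z T = false) :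
    mset d (x, y, z) ∉ T.map (mset d) := by
  induction T with
  | nil => simp
  | cons t T ih =>
    have h' : cond (same x y z t) true (memT x y z T) = false := h
    cases hs : same x y z t with
    | true => rw [hs] at h'; exact absurd h' (by simp)
    | false =>
      rw [hs] at h'
      rw [List.map_cons, List.mem_cons, not_or]
      refine ⟨fun hm => ?_, ih (fun t ht => hT t (List.mem_cons_of_mem _ ht)) h'⟩
      rw [same_of_mset hc hx hy hz (hT t List.mem_cons_self) hm] at hs
      exact absurd hs (by simp)

theorem pushT_sound {d : ℕ → ℕ → ℝ} (hd : Geo d) {cs : List ℕ} (hc : CInv d cs) {x y z : ℕ}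
    (hx : x ∈ cs) (hy : y ∈ cs) (hz : z ∈ cs) {T : List (ℕ × ℕ × ℕ)} (hT : TInv d cs T)
    (ht : IsTri d (mset d (x, y, z))) {k : List (ℕ × ℕ × ℕ) → Bool}
    (h : pushT x y z T k = true) : ∃ T', TInv d cs T' ∧ k T' = true := by
  have hnew : memT x y z T = false → TInv d cs ((x, y, z) :: T) := by
    intro hm
    refine ⟨?_, ?_, ?_⟩
    · intro t h'
      rcases List.mem_cons.1 h' with rfl | h'
      · exact ⟨hx, hy, hz⟩
      · exact hT.1 t h'
    · intro t h'
      rcases List.mem_cons.1 h' with rfl | h'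
      · exact ht
      · exact hT.2.1 t h'
    · rw [List.map_cons, List.nodup_cons]
      exact ⟨memT_false hc hx hy hz hT.1 hm, hT.2.2⟩
  rcases cond_elim h with ⟨_, h2⟩ | ⟨h1, h2⟩
  · exact ⟨T, hT, h2⟩
  · have hn := hnew h1
    have hl := hd.tri _ hn.2.2 (by
      intro m hm
      obtain ⟨t, ht, rfl⟩ := List.mem_map.1 hm
      exact hn.2.1 t ht)
    rw [List.length_map] at hl
    match T, h2, hn, hl with
    | [], h2, hn, _ => exact ⟨_, hn, h2⟩
    | [_], h2, hn, _ => exact ⟨_, hn, h2⟩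
    | [_, _], h2, hn, _ => exact ⟨_, hn, h2⟩
    | _ :: _ :: _ :: _, _, _, hl => simp only [List.length_cons] at hl; omega

/-- The excluded triple types really do not occur. -/
def Forb (d : ℕ → ℕ → ℝ) (lo : ℕ) : Prop :=
  ∀ i j k : ℕ, i < 6 → j < 6 → k < 6 → i ≠ j → i ≠ k → j ≠ k → ∀ x y z : ℕ,
    val d x = d i j → val d y = d i k → val d z = d j k → forb lo x y z = false

/-- Distinct vertices. -/
def TriOk (t : ℕ × ℕ × ℕ) : Prop :=
  t.1 < 6 ∧ t.2.1 < 6 ∧ t.2.2 < 6 ∧ t.1 ≠ t.2.1 ∧ t.1 ≠ t.2.2 ∧ t.2.1 ≠ t.2.2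

theorem addT_sound {d : ℕ → ℕ → ℝ} (hd : Geo d) {lo : ℕ} (hf : Forb d lo) {cs : List ℕ}
    (hc : CInv d cs) {L : List CEdge} (hL : LInv d cs L) {ts : List (ℕ × ℕ × ℕ)}
    (hts : ∀ t ∈ ts, TriOk t) {T : List (ℕ × ℕ × ℕ)} (hT : TInv d cs T)
    {k : List (ℕ × ℕ × ℕ) → Bool} (h : addT lo L ts T k = true) :
    ∃ T', TInv d cs T' ∧ k T' = true := by
  induction ts generalizing T with
  | nil => exact ⟨T, hT, h⟩
  | cons t ts ih =>
    obtain ⟨a, b, c⟩ := t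
    rw [addT] at h
    obtain ⟨x, hx, ex, h⟩ := getS_sound hd hL h
    obtain ⟨y, hy, ey, h⟩ := getS_sound hd hL h
    obtain ⟨z, hz, ez, h⟩ := getS_sound hd hL h
    obtain ⟨o1, o2, o3, o4, o5, o6⟩ := hts (a, b, c) List.mem_cons_self
    rcases cond_elim h with ⟨h1, _⟩ | ⟨_, h⟩
    · rw [hf a b c o1 o2 o3 o4 o5 o6 x y z ex ey ez] at h1
      exact absurd h1 (by simp)
    · obtain ⟨T', hT', h⟩ := pushT_sound hd hc hx hy hz hT
        ⟨a, b, c, o1, o2, o3, o4, o5, o6, by simp only [mset, ex, ey, ez]⟩ h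
      exact ih (fun t ht => hts t (List.mem_cons_of_mem _ ht)) hT' h

theorem eq5_t {x a b c e : ℕ} (h : eq5 x a b c e = true) : a = x ∧ b = x ∧ c = x ∧ e = x := by
  obtain ⟨h1, h⟩ := cond_and h
  obtain ⟨h2, h⟩ := cond_and h
  obtain ⟨h3, h⟩ := cond_and h
  exact ⟨(beq_t h1).symm, (beq_t h2).symm, (beq_t h3).symm, (beq_t h).symm⟩

theorem eq33_t {x a b y c e : ℕ} (h : eq33 x a b y c e = true) :
    a = x ∧ b = x ∧ c = y ∧ e = y := by
  obtain ⟨h1, h⟩ := cond_and h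
  obtain ⟨h2, h⟩ := cond_and h
  obtain ⟨h3, h⟩ := cond_and h
  exact ⟨(beq_t h1).symm, (beq_t h2).symm, (beq_t h3).symm, (beq_t h).symm⟩

theorem eq42_t {x a b c y e : ℕ} (h : eq42 x a b c y e = true) :
    a = x ∧ b = x ∧ c = x ∧ e = y := by
  obtain ⟨h1, h⟩ := cond_and h
  obtain ⟨h2, h⟩ := cond_and h
  obtain ⟨h3, h⟩ := cond_and h
  exact ⟨(beq_t h1).symm, (beq_t h2).symm, (beq_t h3).symm, (beq_t h).symm⟩

theorem rel_dia {u w : ℝ} (hu : 0 < u) (hw : 0 < w) (h : u * w * (3 * u - w) = 0) :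
    SqRel 0 u w := by
  have : 3 * u - w = 0 := by
    rcases mul_eq_zero.1 h with h | h
    · exact absurd h (by positivity)
    · exact h
  change w = 3 * u
  linarith

theorem rel_star {u w : ℝ} (_hu : 0 < u) (hw : 0 < w) (h : w ^ 2 * (3 * u - w) = 0) :
    SqRel 0 u w := by
  have : 3 * u - w = 0 := by
    rcases mul_eq_zero.1 h with h | h
    · exact absurd h (by positivity)
    · exact h
  change w = 3 * u
  linarith

theorem rel_sq {u w : ℝ} (_hu : 0 < u) (hw : 0 < w) (h : w ^ 2 * (2 * u - w) = 0) :
    SqRel 1 u w := by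
  have : 2 * u - w = 0 := by
    rcases mul_eq_zero.1 h with h | h
    · exact absurd h (by positivity)
    · exact h
  change w = 2 * u
  linarith

theorem rel_path {u w : ℝ} (hu : 0 < u) (hw : 0 < w)
    (h : (u + w) * (3 * u * w - u ^ 2 - w ^ 2) = 0) : SqRel 2 u w := by
  have : 3 * u * w - u ^ 2 - w ^ 2 = 0 := by
    rcases mul_eq_zero.1 h with h | h
    · exact absurd h (by positivity)
    · exact h
  change u ^ 2 + w ^ 2 = 3 * u * w
  linarith

theorem quadK_sound {d : ℕ → ℕ → ℝ} {cs : List ℕ} (hc : CInv d cs) {ab ac ad bc bd cd : ℕ}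
    (h1 : ab ∈ cs) (h2 : ac ∈ cs) (h3 : ad ∈ cs) (h4 : bc ∈ cs) (h5 : bd ∈ cs) (h6 : cd ∈ cs)
    (hcm : cm (val d ab) (val d ac) (val d ad) (val d bc) (val d bd) (val d cd) = 0)
    {k : ℕ → ℕ → ℕ → Bool} {k0 : Bool} (h : quadK ab ac ad bc bd cd k k0 = true) :
    k0 = true ∨ ∃ x ∈ cs, ∃ y ∈ cs, ∃ t, t < 3 ∧ SqRel t (val d x) (val d y) ∧ k x y t = true := by
  have hp := hc.2
  unfold cm at hcm
  rcases cond_elim h with ⟨g, h⟩ | ⟨_, h⟩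
  · obtain ⟨rfl, rfl, rfl, rfl⟩ := eq5_t g
    exact Or.inr ⟨_, by assumption, _, by assumption, _, by norm_num, rel_dia (hp _ (by assumption))
      (hp _ (by assumption)) (by linear_combination hcm / 2), h⟩
  iterate 5
    rcases cond_elim h with ⟨g, h⟩ | ⟨_, h⟩
    · obtain ⟨rfl, rfl, rfl, rfl⟩ := eq5_t g
      exact Or.inr ⟨_, by assumption, _, by assumption, _, by norm_num, rel_dia (hp _ (by assumption))
        (hp _ (by assumption)) (by linear_combination hcm / 2), h⟩
  iterate 4
    rcases cond_elim h with ⟨g, h⟩ | ⟨_, h⟩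
    · obtain ⟨rfl, rfl, rfl, rfl⟩ := eq33_t g
      exact Or.inr ⟨_, by assumption, _, by assumption, _, by norm_num, rel_star (hp _ (by assumption))
        (hp _ (by assumption)) (by linear_combination hcm / 2), h⟩
  iterate 3
    rcases cond_elim h with ⟨g, h⟩ | ⟨_, h⟩
    · obtain ⟨rfl, rfl, rfl, rfl⟩ := eq42_t g
      exact Or.inr ⟨_, by assumption, _, by assumption, _, by norm_num, rel_sq (hp _ (by assumption))
        (hp _ (by assumption)) (by linear_combination hcm / 4), h⟩
  iterate 6
    rcases cond_elim h with ⟨g, h⟩ | ⟨_, h⟩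
    · obtain ⟨rfl, rfl, rfl, rfl⟩ := eq33_t g
      exact Or.inr ⟨_, by assumption, _, by assumption, _, by norm_num, rel_path (hp _ (by assumption))
        (hp _ (by assumption)) (by linear_combination hcm / 2), h⟩
  exact Or.inl h


theorem cond_beq {a b : ℕ} {A : Bool} (h : cond (Nat.beq a b) A false = true) :
    a = b ∧ A = true :=
  ⟨beq_t (cond_and h).1, (cond_and h).2⟩

theorem rel_conflict {t t' : ℕ} {u w : ℝ} (hu : 0 < u) (hw : 0 < w) (ht : t < 3) (ht' : t' < 3)
    (hne : t ≠ t') (h : SqRel t u w) (h' : SqRel t' u w) : False := by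
  interval_cases t <;> interval_cases t' <;> simp only [SqRel] at h h' <;>
    first
    | exact hne rfl
    | (subst h; nlinarith [mul_pos hu hu])
    | (subst h'; nlinarith [mul_pos hu hu])

theorem rel_conflict_swap {t t' : ℕ} {u w : ℝ} (hu : 0 < u) (hw : 0 < w) (ht : t < 3)
    (ht' : t' < 3) (hne : t ≠ t' ∨ t ≠ 2) (h : SqRel t u w) (h' : SqRel t' w u) : False := by
  interval_cases t <;> interval_cases t' <;> simp only [SqRel] at h h' <;>
    first
    | simp at hne; done
    | linarith
    | (subst h; nlinarith [mul_pos hu hu])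
    | (subst h'; nlinarith [mul_pos hw hw])

theorem rel_self {t : ℕ} {u : ℝ} (hu : 0 < u) (ht : t < 3) (h : SqRel t u u) : False := by
  interval_cases t <;> simp only [SqRel] at h <;> nlinarith [mul_pos hu hu]

theorem conflR_sound {d : ℕ → ℕ → ℝ} {cs : List ℕ} (hc : CInv d cs) {x y t : ℕ} (hx : x ∈ cs)
    (hy : y ∈ cs) (ht : t < 3) (hr : SqRel t (val d x) (val d y)) {R : List (ℕ × ℕ × ℕ)}
    (hR : RInv d cs R) (h : conflR x y t R = true) : False := by
  induction R with
  | nil => exact absurd h (by simp [conflR])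
  | cons r R ih =>
    obtain ⟨x', y', t'⟩ := r
    have hR' : RInv d cs R := fun r hr => hR r (List.mem_cons_of_mem _ hr)
    obtain ⟨_, _, ht', hr'⟩ := hR (x', y', t') List.mem_cons_self
    simp only at ht' hr'
    have px := hc.2 x hx
    have py := hc.2 y hy
    rw [conflR] at h
    rcases cond_elim h with ⟨g1, h⟩ | ⟨_, h⟩
    · rcases cond_elim h with ⟨g2, h⟩ | ⟨_, h⟩
      · rcases cond_elim h with ⟨_, h⟩ | ⟨g3, h⟩
        · exact ih hR' h
        · rw [← beq_t g1, ← beq_t g2] at hr'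
          exact rel_conflict px py ht ht' (beq_f g3) hr hr'
      · exact ih hR' h
    · rcases cond_elim h with ⟨g1, h⟩ | ⟨_, h⟩
      · rcases cond_elim h with ⟨g2, h⟩ | ⟨_, h⟩
        · rw [← beq_t g1, ← beq_t g2] at hr'
          rcases cond_elim h with ⟨_, h⟩ | ⟨g3, h⟩
          · rcases cond_elim h with ⟨_, h⟩ | ⟨g3, h⟩
            · exact ih hR' h
            · exact rel_conflict_swap px py ht ht' (Or.inr (beq_f g3)) hr hr'
          · exact rel_conflict_swap px py ht ht' (Or.inl (beq_f g3)) hr hr'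
        · exact ih hR' h
      · exact ih hR' h

theorem addR_sound {d : ℕ → ℕ → ℝ} (hd : Geo d) {cs : List ℕ}
    (hc : CInv d cs) {L : List CEdge} (hL : LInv d cs L) {qs : List (ℕ × ℕ × ℕ × ℕ)}
    {R : List (ℕ × ℕ × ℕ)} (hR : RInv d cs R)
    {k : List (ℕ × ℕ × ℕ) → Bool} (h : addR L qs R k = true) :
    ∃ R', RInv d cs R' ∧ k R' = true := by
  induction qs generalizing R with
  | nil => exact ⟨R, hR, h⟩
  | cons q qs ih =>
    obtain ⟨a, b, c, e⟩ := q
    rw [addR] at h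
    obtain ⟨ab, h1, e1, h⟩ := getS_sound hd hL h
    obtain ⟨ac, h2, e2, h⟩ := getS_sound hd hL h
    obtain ⟨ad, h3, e3, h⟩ := getS_sound hd hL h
    obtain ⟨bc, h4, e4, h⟩ := getS_sound hd hL h
    obtain ⟨bd, h5, e5, h⟩ := getS_sound hd hL h
    obtain ⟨cd, h6, e6, h⟩ := getS_sound hd hL h
    have hcm := hd.cm a b c e
    rw [← e1, ← e2, ← e3, ← e4, ← e5, ← e6] at hcm
    rcases quadK_sound hc h1 h2 h3 h4 h5 h6 hcm h with h | ⟨x, hx, y, hy, t, ht, hr, h⟩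
    · exact ih hR h
    · rcases cond_elim h with ⟨g, _⟩ | ⟨_, h⟩
      · rw [← beq_t g] at hr
        exact (rel_self (hc.2 x hx) ht hr).elim
      · rcases cond_elim h with ⟨g, _⟩ | ⟨_, h⟩
        · exact (conflR_sound hc hx hy ht hr hR g).elim
        · refine ih ?_ h
          intro r hr'
          rcases List.mem_cons.1 hr' with rfl | hr'
          · exact ⟨hx, hy, ht, hr⟩
          · exact hR r hr'

/-- Distinct vertices. -/
def K23Ok (t : ℕ × ℕ × ℕ × ℕ × ℕ) : Prop :=
  t.1 < 6 ∧ t.2.1 < 6 ∧ t.2.2.1 < 6 ∧ t.2.2.2.1 < 6 ∧ t.2.2.2.2 < 6 ∧ t.1 ≠ t.2.1 ∧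
    t.2.2.1 ≠ t.2.2.2.1 ∧ t.2.2.1 ≠ t.2.2.2.2 ∧ t.2.2.2.1 ≠ t.2.2.2.2

theorem hasK23_sound {d : ℕ → ℕ → ℝ} (hd : Geo d) {cs : List ℕ}
    {L : List CEdge} (hL : LInv d cs L) {ks : List (ℕ × ℕ × ℕ × ℕ × ℕ)}
    (hks : ∀ t ∈ ks, K23Ok t) (h : hasK23 L ks = true) : False := by
  induction ks with
  | nil => exact absurd h (by simp [hasK23])
  | cons t ks ih =>
    obtain ⟨u, v, x, y, z⟩ := t
    rw [hasK23] at h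
    rcases cond_elim h with ⟨h, _⟩ | ⟨_, h⟩
    · obtain ⟨o1, o2, o3, o4, o5, o6, o7, o8, o9⟩ := hks _ List.mem_cons_self
      obtain ⟨c1, _, e1, h⟩ := getS_sound hd hL h
      obtain ⟨c2, _, e2, h⟩ := getS_sound hd hL h
      obtain ⟨g1, h⟩ := cond_and h
      obtain ⟨c3, _, e3, h⟩ := getS_sound hd hL h
      obtain ⟨g2, h⟩ := cond_and h
      obtain ⟨f1, _, e4, h⟩ := getS_sound hd hL h
      obtain ⟨f2, _, e5, h⟩ := getS_sound hd hL h
      obtain ⟨g3, h⟩ := cond_and h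
      obtain ⟨f3, _, e6, h⟩ := getS_sound hd hL h
      have g1 := beq_t g1
      have g2 := beq_t g2
      have g3 := beq_t g3
      have g4 := beq_t h
      subst g1 g2 g3 g4
      exact hd.k23 u v x y z o1 o2 o3 o4 o5 o6 o7 o8 o9 (e1.symm.trans e2) (e1.symm.trans e3)
        (e4.symm.trans e5) (e4.symm.trans e6)
    · exact ih (fun t ht => hks t (List.mem_cons_of_mem _ ht)) h

theorem isHex_sound {d : ℕ → ℕ → ℝ} (hd : Geo d) {cs : List ℕ}
    {L : List CEdge} (hL : LInv d cs L) {s : List ℕ} (hs : List.Perm s [1, 2, 3, 4, 5])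
    (h : isHex L s = true) : HexPat d := by
  match s, hs, h with
  | [b, c, e, f, g], hs, h =>
    rw [isHex] at h
    obtain ⟨_, h⟩ := cond_and h
    obtain ⟨x, _, ex, h⟩ := getS_sound hd hL h
    obtain ⟨x1, _, ex1, h⟩ := getS_sound hd hL h
    obtain ⟨q1, h⟩ := cond_beq h
    obtain ⟨x2, _, ex2, h⟩ := getS_sound hd hL h
    obtain ⟨q2, h⟩ := cond_beq h
    obtain ⟨x3, _, ex3, h⟩ := getS_sound hd hL h
    obtain ⟨q3, h⟩ := cond_beq h
    obtain ⟨x4, _, ex4, h⟩ := getS_sound hd hL h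
    obtain ⟨q4, h⟩ := cond_beq h
    obtain ⟨x5, _, ex5, h⟩ := getS_sound hd hL h
    obtain ⟨q5, h⟩ := cond_beq h
    obtain ⟨y, _, ey, h⟩ := getS_sound hd hL h
    obtain ⟨y1, _, ey1, h⟩ := getS_sound hd hL h
    obtain ⟨q6, h⟩ := cond_beq h
    obtain ⟨y2, _, ey2, h⟩ := getS_sound hd hL h
    obtain ⟨q7, h⟩ := cond_beq h
    obtain ⟨y3, _, ey3, h⟩ := getS_sound hd hL h
    obtain ⟨q8, h⟩ := cond_beq h
    obtain ⟨y4, _, ey4, h⟩ := getS_sound hd hL h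
    obtain ⟨q9, h⟩ := cond_beq h
    obtain ⟨y5, _, ey5, h⟩ := getS_sound hd hL h
    obtain ⟨q10, h⟩ := cond_beq h
    obtain ⟨z, _, ez, h⟩ := getS_sound hd hL h
    obtain ⟨z1, _, ez1, h⟩ := getS_sound hd hL h
    obtain ⟨q11, h⟩ := cond_beq h
    obtain ⟨z2, _, ez2, h⟩ := getS_sound hd hL h
    have q12 := beq_t h
    refine ⟨b, c, e, f, g, hs, ?_, ?_, ?_, ?_, ?_, ?_, ?_, ?_, ?_, ?_, ?_, ?_⟩
    · rw [← ex, ← ex1, q1]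
    · rw [← ex, ← ex2, q2]
    · rw [← ex, ← ex3, q3]
    · rw [← ex, ← ex4, q4]
    · rw [← ex, ← ex5, q5]
    · rw [← ey, ← ey1, q6]
    · rw [← ey, ← ey2, q7]
    · rw [← ey, ← ey3, q8]
    · rw [← ey, ← ey4, q9]
    · rw [← ey, ← ey5, q10]
    · rw [← ez, ← ez1, q11]
    · rw [← ez, ← ez2, q12]
  | [], _, h => exact absurd h (by simp [isHex])
  | [_], _, h => exact absurd h (by simp [isHex])
  | [_, _], _, h => exact absurd h (by simp [isHex])
  | [_, _, _], _, h => exact absurd h (by simp [isHex])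
  | [_, _, _, _], _, h => exact absurd h (by simp [isHex])
  | _ :: _ :: _ :: _ :: _ :: _ :: _, _, h => exact absurd h (by simp [isHex])

theorem anyHex_sound {d : ℕ → ℕ → ℝ} (hd : Geo d) {cs : List ℕ}
    {L : List CEdge} (hL : LInv d cs L) {ss : List (List ℕ)}
    (hs : ∀ s ∈ ss, List.Perm s [1, 2, 3, 4, 5]) (h : anyHex L ss = true) : HexPat d := by
  induction ss with
  | nil => exact absurd h (by simp [anyHex])
  | cons s ss ih =>
    rw [anyHex] at h
    rcases cond_elim h with ⟨h, _⟩ | ⟨_, h⟩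
    · exact isHex_sound hd hL (hs s List.mem_cons_self) h
    · exact ih (fun t ht => hs t (List.mem_cons_of_mem _ ht)) h

theorem allK_sound {cs : List ℕ} {k : ℕ → Bool} (h : allK cs k = true) :
    ∀ c ∈ cs, k c = true := by
  induction cs with
  | nil => simp
  | cons c cs ih =>
    rw [allK] at h
    obtain ⟨h1, h2⟩ := cond_and h
    intro x hx
    rcases List.mem_cons.1 hx with rfl | hx
    · exact h1
    · exact ih h2 x hx

/-- Validity of a step. -/
def StepOk (s : Step) : Prop :=
  s.1 < 6 ∧ s.2.1 < 6 ∧ s.1 ≠ s.2.1 ∧ s.2.2.1 / 6 = s.1 ∧ s.2.2.1 % 6 = s.2.1 ∧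
    (∀ t ∈ s.2.2.2.1, TriOk t) ∧ ∀ t ∈ s.2.2.2.2.2, K23Ok t

instance (t : ℕ × ℕ × ℕ) : Decidable (TriOk t) := by unfold TriOk; infer_instance

instance (t : ℕ × ℕ × ℕ × ℕ × ℕ) : Decidable (K23Ok t) := by unfold K23Ok; infer_instance

instance (s : Step) : Decidable (StepOk s) := by unfold StepOk; infer_instance

theorem allSteps_ok : ∀ s ∈ allSteps, StepOk s := by
  decide +kernel

theorem search_sound {d : ℕ → ℕ → ℝ} (hd : Geo d) {lo : ℕ} (hf : Forb d lo) {steps : List Step}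
    (hs : ∀ s ∈ steps, StepOk s) {L : List CEdge} {cs : List ℕ} {T R : List (ℕ × ℕ × ℕ)}
    (hL : LInv d cs L) (hc : CInv d cs) (hT : TInv d cs T) (hR : RInv d cs R)
    (h : search lo steps L cs T R = true) : HexPat d := by
  induction steps generalizing L cs T R with
  | nil =>
    exact anyHex_sound hd hL (fun s hs => List.mem_permutations'.1 hs) h
  | cons s steps ih =>
    obtain ⟨i, j, e, ts, qs, ks⟩ := s
    obtain ⟨o1, o2, o3, o4, o5, o6, o7⟩ := hs _ List.mem_cons_self
    simp only at o1 o2 o3 o4 o5 o6 o7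
    have hs' : ∀ s ∈ steps, StepOk s := fun s h => hs s (List.mem_cons_of_mem _ h)
    rw [search] at h
    obtain ⟨ha, h⟩ := cond_and h
    have hev : val d e = d i j := by rw [val, o4, o5]
    by_cases hex : ∃ z ∈ cs, val d z = d i j
    · obtain ⟨z, hz, hzv⟩ := hex
      have hL' : LInv d cs ((i, j, z) :: L) := by
        intro x hx
        rcases List.mem_cons.1 hx with rfl | hx
        · exact ⟨hz, hzv⟩
        · exact hL x hx
      obtain ⟨T', hT', h⟩ := addT_sound hd hf hc hL' o6 hT (allK_sound ha z hz)
      obtain ⟨R', hR', h⟩ := addR_sound hd hc hL' hR h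
      rcases cond_elim h with ⟨h, _⟩ | ⟨_, h⟩
      · exact (hasK23_sound hd hL' o7 h).elim
      · exact ih hs' hL' hc hT' hR' h
    · push Not at hex
      have sub : ∀ x ∈ cs, x ∈ e :: cs := fun x hx => List.mem_cons_of_mem _ hx
      have hL' : LInv d (e :: cs) ((i, j, e) :: L) := by
        intro x hx
        rcases List.mem_cons.1 hx with rfl | hx
        · exact ⟨List.mem_cons_self, hev⟩
        · exact ⟨sub _ (hL x hx).1, (hL x hx).2⟩
      have hc' : CInv d (e :: cs) := by
        refine ⟨?_, ?_⟩
        · intro x hx y hy hxy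
          rcases List.mem_cons.1 hx with hx' | hx' <;> rcases List.mem_cons.1 hy with hy' | hy'
          · rw [hx', hy']
          · subst hx'
            exact absurd (hxy.symm.trans hev) (hex y hy')
          · subst hy'
            exact absurd (hxy.trans hev) (hex x hx')
          · exact hc.1 x hx' y hy' hxy
        · intro x hx
          rcases List.mem_cons.1 hx with rfl | hx
          · rw [hev]; exact hd.pos i j o1 o2 o3
          · exact hc.2 x hx
      have hT1 : TInv d (e :: cs) T :=
        ⟨fun t ht => ⟨sub _ (hT.1 t ht).1, sub _ (hT.1 t ht).2.1, sub _ (hT.1 t ht).2.2⟩, hT.2⟩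
      have hR1 : RInv d (e :: cs) R :=
        fun r hr => ⟨sub _ (hR r hr).1, sub _ (hR r hr).2.1, (hR r hr).2.2⟩
      obtain ⟨T', hT', h⟩ := addT_sound hd hf hc' hL' o6 hT1 h
      obtain ⟨R', hR', h⟩ := addR_sound hd hc' hL' hR1 h
      rcases cond_elim h with ⟨h, _⟩ | ⟨_, h⟩
      · exact (hasK23_sound hd hL' o7 h).elim
      · exact ih hs' hL' hc' hT' hR' h


/-! ## Geometry of the plane -/

theorem dist_sq_plane (a b : Plane) : dist a b ^ 2 = (a 0 - b 0) ^ 2 + (a 1 - b 1) ^ 2 := by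
  rw [EuclideanSpace.dist_eq, Real.sq_sqrt (by positivity), Fin.sum_univ_two, Real.dist_eq,
    Real.dist_eq, sq_abs, sq_abs]

/-- The multiset of squared side lengths of a triangle. -/
def sides (a b c : Plane) : Multiset ℝ := {dist a b ^ 2, dist a c ^ 2, dist b c ^ 2}

theorem sides_swap₁ (a b c : Plane) : sides a b c = sides b a c := by
  unfold sides
  rw [dist_comm b a]
  simp only [Multiset.insert_eq_cons]
  rw [← Multiset.cons_zero, ← Multiset.cons_zero, Multiset.cons_swap (dist a c ^ 2)]

theorem sides_swap₂ (a b c : Plane) : sides a b c = sides a c b := by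
  unfold sides
  rw [dist_comm c b]
  simp only [Multiset.insert_eq_cons]
  rw [Multiset.cons_swap (dist a b ^ 2)]

theorem sides_of_cong {a b c a' b' c' : Plane} (hab : a ≠ b) (hac : a ≠ c) (hbc : b ≠ c)
    (h : Cong {a, b, c} {a', b', c'}) : sides a b c = sides a' b' c' := by
  obtain ⟨f, hf⟩ := h
  have hs : sides a b c = sides (f a) (f b) (f c) := by
    unfold sides
    rw [f.dist_eq, f.dist_eq, f.dist_eq]
  have h1 : f a ≠ f b := fun h => hab (f.injective h)
  have h2 : f a ≠ f c := fun h => hac (f.injective h)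
  have h3 : f b ≠ f c := fun h => hbc (f.injective h)
  have ha : f a ∈ ({a', b', c'} : Set Plane) := by rw [← hf]; exact ⟨a, by simp, rfl⟩
  have hb : f b ∈ ({a', b', c'} : Set Plane) := by rw [← hf]; exact ⟨b, by simp, rfl⟩
  have hc : f c ∈ ({a', b', c'} : Set Plane) := by rw [← hf]; exact ⟨c, by simp, rfl⟩
  simp only [Set.mem_insert_iff, Set.mem_singleton_iff] at ha hb hc
  rw [hs]
  rcases ha with ha | ha | ha <;> rcases hb with hb | hb | hb <;> rcases hc with hc | hc | hc <;>
    rw [ha, hb] at h1 <;> rw [ha, hc] at h2 <;> rw [hb, hc] at h3 <;> rw [ha, hb, hc] <;>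
    first
    | exact absurd rfl h1
    | exact absurd rfl h2
    | exact absurd rfl h3
    | rfl
    | exact sides_swap₁ _ _ _
    | exact sides_swap₂ _ _ _
    | exact (sides_swap₁ _ _ _).trans (sides_swap₂ _ _ _)
    | exact (sides_swap₂ _ _ _).trans (sides_swap₁ _ _ _)
    | exact ((sides_swap₂ _ _ _).trans (sides_swap₁ _ _ _)).trans (sides_swap₂ _ _ _)

/-- Squared distances between labelled points. -/
def sqd (p : ℕ → Plane) (i j : ℕ) : ℝ := dist (p i) (p j) ^ 2

theorem geo_of {P : Set Plane} (h : numTriangles P ≤ 3) {p : ℕ → Plane}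
    (hp : ∀ i, p i ∈ P) (hinj : ∀ i j, i < 6 → j < 6 → i ≠ j → p i ≠ p j) : Geo (sqd p) where
  symm i j := by rw [sqd, sqd, dist_comm]
  pos i j hi hj hij := by
    have := dist_pos.2 (hinj i j hi hj hij)
    unfold sqd
    positivity
  cm a b c e := by
    simp only [cm, sqd, dist_sq_plane]
    ring
  k23 u v x y z hu hv hx hy hz huv hxy hxz hyz h1 h2 h3 h4 := by
    have e : ∀ a b c e : ℕ, sqd p a b = sqd p c e → dist (p a) (p b) = dist (p c) (p e) :=
      fun a b c e h => (sq_eq_sq₀ dist_nonneg dist_nonneg).1 h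
    have hfin : Module.finrank ℝ Plane = 2 := by simp
    have := EuclideanGeometry.eq_of_dist_eq_of_dist_eq_of_finrank_eq_two hfin
      (c₁ := p u) (c₂ := p v) (p₁ := p x) (p₂ := p y) (p := p z) (r₁ := dist (p u) (p x))
      (r₂ := dist (p v) (p x)) (hinj u v hu hv huv) (hinj x y hx hy hxy)
      (dist_comm _ _) (by rw [dist_comm, e _ _ _ _ h1]) (by rw [dist_comm, e _ _ _ _ h2])
      (dist_comm _ _) (by rw [dist_comm, e _ _ _ _ h3]) (by rw [dist_comm, e _ _ _ _ h4])
    rcases this with h | h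
    · exact hinj x z hx hz hxz h.symm
    · exact hinj y z hy hz hyz h.symm
  tri l hl hm := by
    classical
    let cls : Set Plane → Set (Set Plane) := fun t => {t' ∈ triplesOf P | Cong t t'}
    have key : ∀ m ∈ l, ∃ s ∈ triplesOf P, ∀ m' ∈ l, True ∧
        ∃ i j k : ℕ, i < 6 ∧ j < 6 ∧ k < 6 ∧ i ≠ j ∧ i ≠ k ∧ j ≠ k ∧
          m = sides (p i) (p j) (p k) ∧ s = {p i, p j, p k} := by
      intro m hml
      obtain ⟨i, j, k, hi, hj, hk, hij, hik, hjk, rfl⟩ := hm m hml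
      exact ⟨{p i, p j, p k}, ⟨p i, p j, p k, hp i, hp j, hp k, hinj i j hi hj hij,
        hinj i k hi hk hik, hinj j k hj hk hjk, rfl⟩, fun m' _ => ⟨trivial, i, j, k, hi, hj, hk,
        hij, hik, hjk, rfl, rfl⟩⟩
    choose! s hs hs' using key
    have hcard : (l.toFinset : Set (Multiset ℝ)).encard ≤ numTriangles P := by
      refine Set.encard_le_encard_of_injOn (f := fun m => cls (s m)) ?_ ?_
      · intro m hml
        exact ⟨s m, hs m (by simpa using hml), rfl⟩
      · intro m hml m' hml' heq
        have hml : m ∈ l := by simpa using hml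
        have hml' : m' ∈ l := by simpa using hml'
        have hin : s m' ∈ cls (s m') := ⟨hs m' hml', IsometryEquiv.refl _, Set.image_id _⟩
        have heq' : cls (s m) = cls (s m') := heq
        rw [← heq'] at hin
        obtain ⟨_, hcong⟩ := hin
        obtain ⟨_, i, j, k, hi, hj, hk, hij, hik, hjk, e1, e2⟩ := hs' m hml m hml
        obtain ⟨_, i', j', k', hi', hj', hk', hij', hik', hjk', e1', e2'⟩ := hs' m' hml' m' hml'
        rw [e2, e2'] at hcong
        rw [e1, e1']
        exact sides_of_cong (hinj i j hi hj hij) (hinj i k hi hk hik) (hinj j k hj hk hjk) hcong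
    have h3 := hcard.trans h
    rw [Set.encard_coe_eq_coe_finsetCard, List.toFinset_card_of_nodup hl] at h3
    exact_mod_cast h3

/-! ## The hexagon from its distances -/

theorem perp_scale {w1 w2 e1 e2 c1 c2 : ℝ} (hw : 0 < w1 ^ 2 + w2 ^ 2)
    (he : e1 * w1 + e2 * w2 = 0) (hc : c1 * w1 + c2 * w2 = 0) (hR : 0 < c1 ^ 2 + c2 ^ 2) :
    ∃ t, e1 = -t * c1 ∧ e2 = -t * c2 := by
  have hx : (w1 ^ 2 + w2 ^ 2) * (e1 * c2 - e2 * c1) = 0 := by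
    linear_combination (w1 * c2 - w2 * c1) * he - (w1 * e2 - w2 * e1) * hc
  have hx : e1 * c2 - e2 * c1 = 0 := by
    rcases mul_eq_zero.1 hx with h | h
    · exact absurd h hw.ne'
    · exact h
  refine ⟨-(e1 * c1 + e2 * c2) / (c1 ^ 2 + c2 ^ 2), ?_, ?_⟩
  · field_simp
    linear_combination c2 * hx
  · field_simp
    linear_combination -c1 * hx

theorem hex_real {a1 a2 b1 b2 c1 c2 e1 e2 f1 f2 g1 g2 x y z : ℝ}
    (s1 : a1 + b1 + c1 = 0) (s2 : a2 + b2 + c2 = 0) (hx : 0 < x)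
    (x1 : (a1 - b1) ^ 2 + (a2 - b2) ^ 2 = x) (x2 : (a1 - c1) ^ 2 + (a2 - c2) ^ 2 = x)
    (x3 : (b1 - c1) ^ 2 + (b2 - c2) ^ 2 = x) (x4 : (e1 - f1) ^ 2 + (e2 - f2) ^ 2 = x)
    (y1 : (a1 - e1) ^ 2 + (a2 - e2) ^ 2 = y) (y2 : (a1 - f1) ^ 2 + (a2 - f2) ^ 2 = y)
    (y3 : (b1 - e1) ^ 2 + (b2 - e2) ^ 2 = y) (y4 : (b1 - g1) ^ 2 + (b2 - g2) ^ 2 = y)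
    (y5 : (c1 - f1) ^ 2 + (c2 - f2) ^ 2 = y) (y6 : (c1 - g1) ^ 2 + (c2 - g2) ^ 2 = y)
    (z1 : (a1 - g1) ^ 2 + (a2 - g2) ^ 2 = z) (z2 : (b1 - f1) ^ 2 + (b2 - f2) ^ 2 = z)
    (z3 : (c1 - e1) ^ 2 + (c2 - e2) ^ 2 = z) (hne : ¬ (e1 = c1 ∧ e2 = c2)) :
    (e1 = -c1 ∧ e2 = -c2 ∧ f1 = -b1 ∧ f2 = -b2 ∧ g1 = -a1 ∧ g2 = -a2) ∧
    ∃ s : ℝ, (s = √3 / 2 ∨ s = -(√3 / 2)) ∧ b1 = -a1 / 2 - s * a2 ∧ b2 = -a2 / 2 + s * a1 := by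
  obtain rfl : c1 = -a1 - b1 := by linarith
  obtain rfl : c2 = -a2 - b2 := by linarith
  have ra : a1 ^ 2 + a2 ^ 2 = x / 3 := by linear_combination (2 * x1 + 2 * x2 - x3) / 9
  have rb : b1 ^ 2 + b2 ^ 2 = x / 3 := by linear_combination (2 * x1 + 2 * x3 - x2) / 9
  have rab : a1 * b1 + a2 * b2 = -x / 6 := by linear_combination (ra + rb - x1) / 2
  have rc : (-a1 - b1) ^ 2 + (-a2 - b2) ^ 2 = x / 3 := by linear_combination ra + rb + 2 * rab
  obtain ⟨t, te1, te2⟩ := perp_scale (w1 := a1 - b1) (w2 := a2 - b2) (e1 := e1) (e2 := e2)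
    (c1 := -a1 - b1) (c2 := -a2 - b2) (by rw [x1]; exact hx)
    (by linear_combination (ra - rb - y1 + y3) / 2) (by linear_combination rb - ra)
    (by rw [rc]; positivity)
  obtain ⟨s, sf1, sf2⟩ := perp_scale (w1 := a1 - (-a1 - b1)) (w2 := a2 - (-a2 - b2)) (e1 := f1)
    (e2 := f2) (c1 := b1) (c2 := b2) (by rw [x2]; exact hx)
    (by linear_combination (ra - rc - y2 + y5) / 2) (by linear_combination 2 * rab + rb)
    (by rw [rb]; positivity)
  obtain ⟨u, ug1, ug2⟩ := perp_scale (w1 := b1 - (-a1 - b1)) (w2 := b2 - (-a2 - b2)) (e1 := g1)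
    (e2 := g2) (c1 := a1) (c2 := a2) (by rw [x3]; exact hx)
    (by linear_combination (rb - rc - y4 + y6) / 2) (by linear_combination 2 * rab + ra)
    (by rw [ra]; positivity)
  subst te1 te2 sf1 sf2 ug1 ug2
  have hy1 : (t ^ 2 - t + 1) * (x / 3) = y := by
    linear_combination y1 - (t ^ 2 - 2 * t + 1) * ra - t ^ 2 * rb - (2 * t ^ 2 - 2 * t) * rab
  have hy2 : (s ^ 2 - s + 1) * (x / 3) = y := by
    linear_combination y2 - ra - s ^ 2 * rb - (2 * s) * rab
  have hy3 : (u ^ 2 - u + 1) * (x / 3) = y := by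
    linear_combination y4 - rb - u ^ 2 * ra - (2 * u) * rab
  have hz1 : (1 + u) ^ 2 * (x / 3) = z := by linear_combination z1 - (1 + u) ^ 2 * ra
  have hz2 : (1 + s) ^ 2 * (x / 3) = z := by linear_combination z2 - (1 + s) ^ 2 * rb
  have hz3 : (1 + t) ^ 2 * (x / 3) = z := by linear_combination z3 - (1 + t) ^ 2 * rc
  have hst : s = t := by
    have : x * (s - t) = 0 := by linear_combination hz2 - hz3 - hy2 + hy1
    rcases mul_eq_zero.1 this with h | h
    · exact absurd h hx.ne'
    · linarith
  have hut : u = t := by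
    have : x * (u - t) = 0 := by linear_combination hz1 - hz3 - hy3 + hy1
    rcases mul_eq_zero.1 this with h | h
    · exact absurd h hx.ne'
    · linarith
  subst hst hut
  have ht2 : x * ((u - 1) * (u + 1)) = 0 := by
    linear_combination x4 - u ^ 2 * ra - 4 * u ^ 2 * rb - 4 * u ^ 2 * rab
  have ht : u = 1 := by
    rcases mul_eq_zero.1 ht2 with h | h
    · exact absurd h hx.ne'
    · rcases mul_eq_zero.1 h with h | h
      · linarith
      · exfalso
        apply hne
        obtain rfl : u = -1 := by linarith
        constructor <;> ring
  subst ht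
  refine ⟨⟨by ring, by ring, by ring, by ring, by ring, by ring⟩, ?_⟩
  have hcr : (a1 * b2 - a2 * b1) ^ 2 = 3 / 4 * (x / 3) ^ 2 := by
    linear_combination (b1 ^ 2 + b2 ^ 2) * ra + (x / 3) * rb
      - (a1 * b1 + a2 * b2 - x / 6) * rab
  have h3 : √3 ^ 2 = 3 := Real.sq_sqrt (by norm_num)
  refine ⟨(a1 * b2 - a2 * b1) / (x / 3), ?_, ?_, ?_⟩
  · have : ((a1 * b2 - a2 * b1) / (x / 3)) ^ 2 = (√3 / 2) ^ 2 := by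
      rw [div_pow, hcr, div_pow (√3) 2, h3]
      field_simp
      norm_num
    exact sq_eq_sq_iff_eq_or_eq_neg.1 this
  · rw [div_mul_eq_mul_div, eq_sub_iff_add_eq, ← eq_sub_iff_add_eq', div_eq_iff (by positivity)]
    linear_combination -b1 * ra + a1 * rab
  · rw [div_mul_eq_mul_div, ← sub_eq_iff_eq_add', eq_div_iff (by positivity)]
    linear_combination -b2 * ra + a2 * rab

theorem six_perm {α : Type*} (A B C E F G : α) :
    ({A, B, C, E, F, G} : Set α) = {A, E, B, G, C, F} := by
  ext x
  simp only [Set.mem_insert_iff, Set.mem_singleton_iff]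
  tauto

theorem six_perm' {α : Type*} (A B C E F G : α) :
    ({A, B, C, E, F, G} : Set α) = {A, F, C, G, B, E} := by
  ext x
  simp only [Set.mem_insert_iff, Set.mem_singleton_iff]
  tauto

set_option maxHeartbeats 1000000 in
theorem hex_of_dist {A B C E F G : Plane} (hAB : A ≠ B) (hEC : E ≠ C)
    (x2 : dist A B ^ 2 = dist A C ^ 2) (x3 : dist A B ^ 2 = dist B C ^ 2)
    (x4 : dist A B ^ 2 = dist E F ^ 2)
    (y2 : dist A E ^ 2 = dist A F ^ 2) (y3 : dist A E ^ 2 = dist B E ^ 2)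
    (y4 : dist A E ^ 2 = dist B G ^ 2) (y5 : dist A E ^ 2 = dist C F ^ 2)
    (y6 : dist A E ^ 2 = dist C G ^ 2) (z2 : dist A G ^ 2 = dist B F ^ 2)
    (z3 : dist A G ^ 2 = dist C E ^ 2) :
    IsRegularHexagon {A, B, C, E, F, G} := by
  have hx : 0 < dist A B ^ 2 := by have := dist_pos.2 hAB; positivity
  simp only [dist_sq_plane] at *
  set o1 : ℝ := (A 0 + B 0 + C 0) / 3 with ho1
  set o2 : ℝ := (A 1 + B 1 + C 1) / 3 with ho2
  have hne : ¬ (E 0 - o1 = C 0 - o1 ∧ E 1 - o2 = C 1 - o2) := by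
    rintro ⟨h1, h2⟩
    apply hEC
    ext i
    fin_cases i
    · simpa using h1
    · simpa using h2
  obtain ⟨⟨e1, e2, f1, f2, g1, g2⟩, s, hs, b1, b2⟩ :=
    hex_real (a1 := A 0 - o1) (a2 := A 1 - o2) (b1 := B 0 - o1) (b2 := B 1 - o2)
      (c1 := C 0 - o1) (c2 := C 1 - o2) (e1 := E 0 - o1) (e2 := E 1 - o2)
      (f1 := F 0 - o1) (f2 := F 1 - o2) (g1 := G 0 - o1) (g2 := G 1 - o2)
      (by rw [ho1]; ring) (by rw [ho2]; ring) hx (by ring) (by rw [x2]; ring)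
      (by rw [x3]; ring) (by rw [x4]; ring) rfl (by linear_combination -y2)
      (by linear_combination -y3) (by linear_combination -y4) (by linear_combination -y5)
      (by linear_combination -y6) rfl (by linear_combination -z2) (by linear_combination -z3) hne
  set a1 : ℝ := A 0 - o1 with ha1
  set a2 : ℝ := A 1 - o2 with ha2
  set w : ℂ := ⟨a1, a2⟩ with hw
  have hc : ‖w‖ * Real.cos w.arg = a1 := Complex.norm_mul_cos_arg w
  have hsn : ‖w‖ * Real.sin w.arg = a2 := Complex.norm_mul_sin_arg w
  have hw0 : w ≠ 0 := by
    intro h0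
    have h1 : a1 = 0 := congrArg Complex.re h0
    have h2 : a2 = 0 := congrArg Complex.im h0
    rw [h1, h2] at b1 b2
    have e1 : A 0 - B 0 = 0 := by linarith
    have e2 : A 1 - B 1 = 0 := by linarith
    rw [e1, e2] at hx
    norm_num at hx
  have c3 : C 0 = o1 - a1 - (B 0 - o1) := by rw [ha1, ho1]; ring
  have c4 : C 1 = o2 - a2 - (B 1 - o2) := by rw [ha2, ho2]; ring
  refine ⟨pt o1 o2, ‖w‖, w.arg, norm_pos_iff.2 hw0, ?_⟩
  have mk : ∀ (X : Plane) (u v : ℝ), X 0 = o1 + (u * a1 - v * a2) →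
      X 1 = o2 + (v * a1 + u * a2) → ∀ th, Real.cos th = u → Real.sin th = v →
      X = pt o1 o2 + ‖w‖ • pt (Real.cos (w.arg + th)) (Real.sin (w.arg + th)) := by
    intro X u v h1 h2 th hu hv
    ext i
    fin_cases i
    · simp only [pt, Real.cos_add, hu, hv]
      simp [h1]
      linear_combination (-u) * hc + v * hsn
    · simp only [pt, Real.sin_add, hu, hv]
      simp [h2]
      linear_combination (-v) * hc - u * hsn
  have t0c : Real.cos (2 * π * ((0 : Fin 6) : ℕ) / 6) = 1 := by simp
  have t0s : Real.sin (2 * π * ((0 : Fin 6) : ℕ) / 6) = 0 := by simp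
  have r1 : 2 * π * ((1 : Fin 6) : ℕ) / 6 = π / 3 := by
    rw [show ((1 : Fin 6) : ℕ) = 1 from rfl]; push_cast; ring
  have r2 : 2 * π * ((2 : Fin 6) : ℕ) / 6 = π - π / 3 := by
    rw [show ((2 : Fin 6) : ℕ) = 2 from rfl]; push_cast; ring
  have r3 : 2 * π * ((3 : Fin 6) : ℕ) / 6 = π := by
    rw [show ((3 : Fin 6) : ℕ) = 3 from rfl]; push_cast; ring
  have r4 : 2 * π * ((4 : Fin 6) : ℕ) / 6 = π / 3 + π := by
    rw [show ((4 : Fin 6) : ℕ) = 4 from rfl]; push_cast; ring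
  have r5 : 2 * π * ((5 : Fin 6) : ℕ) / 6 = 2 * π - π / 3 := by
    rw [show ((5 : Fin 6) : ℕ) = 5 from rfl]; push_cast; ring
  have t1c : Real.cos (2 * π * ((1 : Fin 6) : ℕ) / 6) = 1 / 2 := by
    rw [r1, Real.cos_pi_div_three]
  have t1s : Real.sin (2 * π * ((1 : Fin 6) : ℕ) / 6) = √3 / 2 := by
    rw [r1, Real.sin_pi_div_three]
  have t2c : Real.cos (2 * π * ((2 : Fin 6) : ℕ) / 6) = -(1 / 2) := by
    rw [r2, Real.cos_pi_sub, Real.cos_pi_div_three]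
  have t2s : Real.sin (2 * π * ((2 : Fin 6) : ℕ) / 6) = √3 / 2 := by
    rw [r2, Real.sin_pi_sub, Real.sin_pi_div_three]
  have t3c : Real.cos (2 * π * ((3 : Fin 6) : ℕ) / 6) = -1 := by
    rw [r3, Real.cos_pi]
  have t3s : Real.sin (2 * π * ((3 : Fin 6) : ℕ) / 6) = 0 := by
    rw [r3, Real.sin_pi]
  have t4c : Real.cos (2 * π * ((4 : Fin 6) : ℕ) / 6) = -(1 / 2) := by
    rw [r4, Real.cos_add_pi, Real.cos_pi_div_three]
  have t4s : Real.sin (2 * π * ((4 : Fin 6) : ℕ) / 6) = -(√3 / 2) := by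
    rw [r4, Real.sin_add_pi, Real.sin_pi_div_three]
  have t5c : Real.cos (2 * π * ((5 : Fin 6) : ℕ) / 6) = 1 / 2 := by
    rw [r5, Real.cos_two_pi_sub, Real.cos_pi_div_three]
  have t5s : Real.sin (2 * π * ((5 : Fin 6) : ℕ) / 6) = -(√3 / 2) := by
    rw [r5, Real.sin_two_pi_sub, Real.sin_pi_div_three]
  have fin : ∀ X0 X1 X2 X3 X4 X5 : Plane, ∀ f : Fin 6 → Plane, X0 = f 0 → X1 = f 1 → X2 = f 2 →
      X3 = f 3 → X4 = f 4 → X5 = f 5 → Set.range f = {X0, X1, X2, X3, X4, X5} := by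
    rintro _ _ _ _ _ _ f rfl rfl rfl rfl rfl rfl
    ext x
    simp [Set.mem_range, Fin.exists_fin_succ, eq_comm]
  rcases hs with rfl | rfl
  · rw [fin A E B G C F _
      (mk A _ _ (by rw [ha1]; ring) (by rw [ha2]; ring) _ t0c t0s)
      (mk E _ _ (by linarith) (by linarith) _ t1c t1s)
      (mk B _ _ (by linarith) (by linarith) _ t2c t2s)
      (mk G _ _ (by linarith) (by linarith) _ t3c t3s)
      (mk C _ _ (by linarith) (by linarith) _ t4c t4s)
      (mk F _ _ (by linarith) (by linarith) _ t5c t5s)]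
    exact six_perm A B C E F G
  · rw [fin A F C G B E _
      (mk A _ _ (by rw [ha1]; ring) (by rw [ha2]; ring) _ t0c t0s)
      (mk F _ _ (by linarith) (by linarith) _ t1c t1s)
      (mk C _ _ (by linarith) (by linarith) _ t2c t2s)
      (mk G _ _ (by linarith) (by linarith) _ t3c t3s)
      (mk B _ _ (by linarith) (by linarith) _ t4c t4s)
      (mk E _ _ (by linarith) (by linarith) _ t5c t5s)]
    exact six_perm' A B C E F G

theorem enum_six {P : Set Plane} (hcard : P.encard = 6) {a b c : Plane} (ha : a ∈ P) (hb : b ∈ P)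
    (hc : c ∈ P) (hab : a ≠ b) (hac : a ≠ c) (hbc : b ≠ c) :
    ∃ p : ℕ → Plane, p 0 = a ∧ p 1 = b ∧ p 2 = c ∧ (∀ i, p i ∈ P) ∧
      (∀ i j, i < 6 → j < 6 → i ≠ j → p i ≠ p j) ∧ P = {p 0, p 1, p 2, p 3, p 4, p 5} := by
  classical
  have h3 : (P \ {a, b, c}).encard = 3 := by
    have h1 := Set.encard_sdiff_add_encard_of_subset (s := {a, b, c}) (t := P)
      (by rintro x (rfl | rfl | rfl) <;> assumption)
    have h2 : ({a, b, c} : Set Plane).encard = 3 :=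
      Set.encard_eq_three.2 ⟨a, b, c, hab, hac, hbc, rfl⟩
    rw [h2, hcard] at h1
    have h6 : (6 : ℕ∞) = 3 + 3 := by norm_num
    rw [h6] at h1
    simpa using h1
  obtain ⟨x, y, z, hxy, hxz, hyz, he⟩ := Set.encard_eq_three.1 h3
  have hx : x ∈ P \ {a, b, c} := by rw [he]; simp
  have hy : y ∈ P \ {a, b, c} := by rw [he]; simp
  have hz : z ∈ P \ {a, b, c} := by rw [he]; simp
  simp only [Set.mem_sdiff, Set.mem_insert_iff, Set.mem_singleton_iff, not_or] at hx hy hz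
  obtain ⟨hx, hxa, hxb, hxc⟩ := hx
  obtain ⟨hy, hya, hyb, hyc⟩ := hy
  obtain ⟨hz, hza, hzb, hzc⟩ := hz
  let p : ℕ → Plane := fun n => match n with
    | 0 => a | 1 => b | 2 => c | 3 => x | 4 => y | _ => z
  refine ⟨p, rfl, rfl, rfl, ?_, ?_, ?_⟩
  · intro i
    match i with
    | 0 => exact ha
    | 1 => exact hb
    | 2 => exact hc
    | 3 => exact hx
    | 4 => exact hy
    | _ + 5 => exact hz
  · have lt : ∀ i j, i < 6 → j < 6 → i < j → p i ≠ p j := by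
      intro i j hi hj hij
      interval_cases j <;> interval_cases i <;> simp only [p] <;>
        first | assumption | (apply Ne.symm; assumption)
    intro i j hi hj hij
    rcases lt_or_gt_of_ne hij with h | h
    · exact lt i j hi hj h
    · exact (lt j i hj hi h).symm
  · ext w
    change w ∈ P ↔ w ∈ ({a, b, c, x, y, z} : Set Plane)
    constructor
    · intro hw
      by_cases hw' : w ∈ ({a, b, c} : Set Plane)
      · simp only [Set.mem_insert_iff, Set.mem_singleton_iff] at hw' ⊢
        tauto
      · have : w ∈ P \ {a, b, c} := ⟨hw, hw'⟩
        rw [he] at this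
        simp only [Set.mem_insert_iff, Set.mem_singleton_iff] at this ⊢
        tauto
    · rintro (rfl | rfl | rfl | rfl | rfl | rfl) <;> assumption

theorem hex_of_pat {p : ℕ → Plane} (hinj : ∀ i j, i < 6 → j < 6 → i ≠ j → p i ≠ p j)
    (h : HexPat (sqd p)) : IsRegularHexagon {p 0, p 1, p 2, p 3, p 4, p 5} := by
  obtain ⟨b, c, e, f, g, hperm, x2, x3, x4, _, _, y2, y3, y4, y5, y6, z2, z3⟩ := h
  have hmem : ∀ i, i ∈ [b, c, e, f, g] ↔ i ∈ [1, 2, 3, 4, 5] := fun i => hperm.mem_iff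
  have hnd : [b, c, e, f, g].Nodup := hperm.nodup_iff.2 (by decide)
  have hbd : ∀ i ∈ [b, c, e, f, g], 0 < i ∧ i < 6 := by
    intro i hi
    have := (hmem i).1 hi
    simp at this
    omega
  have hb := hbd b (by simp)
  have hc := hbd c (by simp)
  have he := hbd e (by simp)
  have hec : e ≠ c := by
    rintro rfl
    simp at hnd
  have hset : ({p 0, p 1, p 2, p 3, p 4, p 5} : Set Plane) = {p 0, p b, p c, p e, p f, p g} := by
    have e1 : ({p 0, p 1, p 2, p 3, p 4, p 5} : Set Plane)
        = insert (p 0) (p '' {i | i ∈ [1, 2, 3, 4, 5]}) := by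
      ext w; simp [eq_comm]
    have e2 : ({p 0, p b, p c, p e, p f, p g} : Set Plane)
        = insert (p 0) (p '' {i | i ∈ [b, c, e, f, g]}) := by
      ext w; simp [eq_comm]
    rw [e1, e2]
    congr 2
    ext i
    exact (hmem i).symm
  rw [hset]
  exact hex_of_dist (hinj 0 b (by norm_num) hb.2 hb.1.ne) (hinj e c he.2 hc.2 hec)
    x2 x3 x4 y2 y3 y4 y5 y6 z2 z3

/-- The common part of the three cases. -/
theorem hex_of_search {P : Set Plane} (hcard : P.encard = 6) (h : numTriangles P ≤ 3)
    {a b c : Plane} (ha : a ∈ P) (hb : b ∈ P) (hc : c ∈ P) (hab : a ≠ b) (hac : a ≠ c)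
    (hbc : b ≠ c)
    (H : ∀ p : ℕ → Plane, p 0 = a → p 1 = b → p 2 = c → (∀ i, p i ∈ P) →
        (∀ i j, i < 6 → j < 6 → i ≠ j → p i ≠ p j) → Geo (sqd p) → HexPat (sqd p)) :
    IsRegularHexagon P := by
  obtain ⟨p, h0, h1, h2, hp, hinj, hP⟩ := enum_six hcard ha hb hc hab hac hbc
  rw [hP]
  exact hex_of_pat hinj (H p h0 h1 h2 hp hinj (geo_of h hp hinj))

theorem dist_of_sqd {p : ℕ → Plane} {i j k l : ℕ} (h : sqd p i j = sqd p k l) :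
    dist (p i) (p j) = dist (p k) (p l) := (sq_eq_sq₀ dist_nonneg dist_nonneg).1 h

theorem rinv_nil (d : ℕ → ℕ → ℝ) (cs : List ℕ) : RInv d cs [] := by
  intro r hr
  simp at hr

theorem tinv_single {d : ℕ → ℕ → ℝ} {cs : List ℕ} {x y z : ℕ} (hx : x ∈ cs) (hy : y ∈ cs)
    (hz : z ∈ cs) (h1 : val d x = d 0 1) (h2 : val d y = d 0 2) (h3 : val d z = d 1 2) :
    TInv d cs [(x, y, z)] := by
  refine ⟨?_, ?_, ?_⟩
  · intro t ht
    rw [List.mem_singleton] at ht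
    subst ht
    exact ⟨hx, hy, hz⟩
  · intro t ht
    rw [List.mem_singleton] at ht
    subst ht
    refine ⟨0, 1, 2, by norm_num, by norm_num, by norm_num, by norm_num, by norm_num,
      by norm_num, ?_⟩
    rw [mset, h1, h2, h3]
  · exact List.nodup_singleton _

theorem linv_three {d : ℕ → ℕ → ℝ} {cs : List ℕ} {x y z : ℕ} (hx : x ∈ cs) (hy : y ∈ cs)
    (hz : z ∈ cs) (h1 : val d x = d 0 1) (h2 : val d y = d 0 2) (h3 : val d z = d 1 2) :
    LInv d cs [(1, 2, z), (0, 2, y), (0, 1, x)] := by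
  intro t ht
  simp only [List.mem_cons, List.not_mem_nil, or_false] at ht
  rcases ht with rfl | rfl | rfl
  · exact ⟨hz, h3⟩
  · exact ⟨hy, h2⟩
  · exact ⟨hx, h1⟩

theorem main_aux (P : Set Plane) (hcard : P.encard = 6) (h : numTriangles P ≤ 3) :
    IsRegularHexagon P := by
  by_cases hA : ∃ a ∈ P, ∃ b ∈ P, ∃ c ∈ P, a ≠ b ∧ a ≠ c ∧ b ≠ c ∧ dist a b = dist a c ∧
      dist a b = dist b c
  · obtain ⟨a, ha, b, hb, c, hc, hab, hac, hbc, e1, e2⟩ := hA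
    refine hex_of_search hcard h ha hb hc hab hac hbc ?_
    intro p h0 h1 h2 hp hinj hg
    have v1 : val (sqd p) 1 = sqd p 0 1 := rfl
    have v2 : val (sqd p) 1 = sqd p 0 2 := by rw [v1, sqd, sqd, h0, h1, h2, e1]
    have v3 : val (sqd p) 1 = sqd p 1 2 := by rw [v1, sqd, sqd, h0, h1, h2, e2]
    refine search_sound hg (lo := 0) ?_ allSteps_ok (linv_three (by simp) (by simp) (by simp)
      v1 v2 v3) ?_ (tinv_single (by simp) (by simp) (by simp) v1 v2 v3) (rinv_nil _ _)
      search_equilateral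
    · intro i j k _ _ _ _ _ _ x y z _ _ _
      rfl
    · refine ⟨?_, ?_⟩
      · intro x hx y hy _
        rw [List.mem_singleton] at hx hy
        rw [hx, hy]
      · intro x hx
        rw [List.mem_singleton] at hx
        rw [hx, v1]
        exact hg.pos 0 1 (by norm_num) (by norm_num) (by norm_num)
  by_cases hB : ∃ a ∈ P, ∃ b ∈ P, ∃ c ∈ P, a ≠ b ∧ a ≠ c ∧ b ≠ c ∧ dist a b = dist a c
  · obtain ⟨a, ha, b, hb, c, hc, hab, hac, hbc, e1⟩ := hB
    refine hex_of_search hcard h ha hb hc hab hac hbc ?_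
    intro p h0 h1 h2 hp hinj hg
    have hno : ∀ i j k, i < 6 → j < 6 → k < 6 → i ≠ j → i ≠ k → j ≠ k → sqd p i j = sqd p i k →
        sqd p i j = sqd p j k → False := by
      intro i j k hi hj hk hij hik hjk q1 q2
      exact hA ⟨p i, hp i, p j, hp j, p k, hp k, hinj i j hi hj hij, hinj i k hi hk hik,
        hinj j k hj hk hjk, dist_of_sqd q1, dist_of_sqd q2⟩
    have v1 : val (sqd p) 1 = sqd p 0 1 := rfl
    have v2 : val (sqd p) 1 = sqd p 0 2 := by rw [v1, sqd, sqd, h0, h1, h2, e1]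
    have v3 : val (sqd p) 8 = sqd p 1 2 := rfl
    have hne : val (sqd p) 1 ≠ val (sqd p) 8 := by
      intro he
      exact hno 0 1 2 (by norm_num) (by norm_num) (by norm_num) (by norm_num) (by norm_num)
        (by norm_num) (v1.symm.trans v2) (v1.symm.trans (he.trans v3))
    refine search_sound hg (lo := 1) ?_ allSteps_ok (linv_three (by simp) (by simp) (by simp)
      v1 v2 v3) ?_ (tinv_single (by simp) (by simp) (by simp) v1 v2 v3) (rinv_nil _ _)
      search_isosceles
    · intro i j k hi hj hk hij hik hjk x y z hx hy hz
      by_contra hf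
      rw [Bool.not_eq_false] at hf
      obtain ⟨f1, f2⟩ := cond_and (show cond (Nat.beq x y) (Nat.beq x z) false = true from hf)
      exact hno i j k hi hj hk hij hik hjk (by rw [← hx, ← hy, beq_t f1])
        (by rw [← hx, ← hz, beq_t f2])
    · refine ⟨?_, ?_⟩
      · intro x hx y hy hxy
        simp only [List.mem_cons, List.not_mem_nil, or_false] at hx hy
        rcases hx with rfl | rfl <;> rcases hy with rfl | rfl
        · rfl
        · exact absurd hxy.symm hne
        · exact absurd hxy hne
        · rfl
      · intro x hx
        simp only [List.mem_cons, List.not_mem_nil, or_false] at hx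
        rcases hx with rfl | rfl
        · rw [v3]
          exact hg.pos 1 2 (by norm_num) (by norm_num) (by norm_num)
        · rw [v1]
          exact hg.pos 0 1 (by norm_num) (by norm_num) (by norm_num)
  · obtain ⟨Q, hQP, hQ⟩ := Set.exists_subset_encard_eq (s := P) (k := 3)
      (by rw [hcard]; norm_num)
    obtain ⟨a, b, c, hab, hac, hbc, rfl⟩ := Set.encard_eq_three.1 hQ
    have ha : a ∈ P := hQP (by simp)
    have hb : b ∈ P := hQP (by simp)
    have hc : c ∈ P := hQP (by simp)
    refine hex_of_search hcard h ha hb hc hab hac hbc ?_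
    intro p h0 h1 h2 hp hinj hg
    have hno : ∀ i j k, i < 6 → j < 6 → k < 6 → i ≠ j → i ≠ k → j ≠ k → sqd p i j = sqd p i k →
        False := by
      intro i j k hi hj hk hij hik hjk q1
      exact hB ⟨p i, hp i, p j, hp j, p k, hp k, hinj i j hi hj hij, hinj i k hi hk hik,
        hinj j k hj hk hjk, dist_of_sqd q1⟩
    have v1 : val (sqd p) 1 = sqd p 0 1 := rfl
    have v2 : val (sqd p) 2 = sqd p 0 2 := rfl
    have v3 : val (sqd p) 8 = sqd p 1 2 := rfl
    have n12 : val (sqd p) 1 ≠ val (sqd p) 2 := fun he =>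
      hno 0 1 2 (by norm_num) (by norm_num) (by norm_num) (by norm_num) (by norm_num)
        (by norm_num) he
    have n18 : val (sqd p) 1 ≠ val (sqd p) 8 := fun he =>
      hno 1 0 2 (by norm_num) (by norm_num) (by norm_num) (by norm_num) (by norm_num)
        (by norm_num) ((hg.symm 1 0).trans he)
    have n28 : val (sqd p) 2 ≠ val (sqd p) 8 := fun he =>
      hno 2 0 1 (by norm_num) (by norm_num) (by norm_num) (by norm_num) (by norm_num)
        (by norm_num) ((hg.symm 2 0).trans (he.trans (hg.symm 1 2)))
    refine search_sound hg (lo := 2) ?_ allSteps_ok (linv_three (by simp) (by simp) (by simp)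
      v1 v2 v3) ?_ (tinv_single (by simp) (by simp) (by simp) v1 v2 v3) (rinv_nil _ _)
      search_scalene
    · intro i j k hi hj hk hij hik hjk x y z hx hy hz
      by_contra hf
      rw [Bool.not_eq_false] at hf
      rcases cond_elim (show cond (Nat.beq x y) true (cond (Nat.beq x z) true (Nat.beq y z))
        = true from hf) with ⟨f1, _⟩ | ⟨_, f⟩
      · exact hno i j k hi hj hk hij hik hjk (by rw [← hx, ← hy, beq_t f1])
      · rcases cond_elim f with ⟨f1, _⟩ | ⟨_, f1⟩
        · exact hno j i k hj hi hk hij.symm hjk hik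
            (by rw [hg.symm j i, ← hx, ← hz, beq_t f1])
        · exact hno k i j hk hi hj hik.symm hjk.symm hij
            (by rw [hg.symm k i, hg.symm k j, ← hy, ← hz, beq_t f1])
    · refine ⟨?_, ?_⟩
      · intro x hx y hy hxy
        simp only [List.mem_cons, List.not_mem_nil, or_false] at hx hy
        rcases hx with rfl | rfl | rfl <;> rcases hy with rfl | rfl | rfl <;>
          first
            | rfl
            | exact absurd hxy n12
            | exact absurd hxy n18
            | exact absurd hxy n28
            | exact absurd hxy.symm n12
            | exact absurd hxy.symm n18
            | exact absurd hxy.symm n28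
      · intro x hx
        simp only [List.mem_cons, List.not_mem_nil, or_false] at hx
        rcases hx with rfl | rfl | rfl
        · rw [v3]
          exact hg.pos 1 2 (by norm_num) (by norm_num) (by norm_num)
        · rw [v2]
          exact hg.pos 0 2 (by norm_num) (by norm_num) (by norm_num)
        · rw [v1]
          exact hg.pos 0 1 (by norm_num) (by norm_num) (by norm_num)

/-- A set of exactly 6 points in the plane spanning at most 3 distinct triangles
must be the vertex set of a regular hexagon. -/
theorem six_points_three_triangles_regular_hexagon
    (P : Set Plane) (hcard : P.encard = 6) (h : numTriangles P ≤ 3) :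
    IsRegularHexagon P := by
  exact main_aux P hcard h
end
end

section
/- Let R(N) denote the number of unordered pairs {A,B} of distinct nonzero points of [N]×[N] such that the triangle with vertices (0,0), A, B is rotatable. Then limsup over N → ∞ of R(N)/N⁴ is at most the sum over all primitive Pythagorean triples (p,q,r) ∈ 𝒫 of 1/(2r²), and in particular is at most 0.0633. -/
open Real

noncomputable section

/-- Membership in the grid `[N] × [N] = {0, 1, …, N-1}²`. -/
def inGrid (N : ℕ) (P : ℤ × ℤ) : Prop := 0 ≤ P.1 ∧ P.1 < N ∧ 0 ≤ P.2 ∧ P.2 < N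

/-- A primitive Pythagorean triple: positive integers `p, q, r` with
`p² + q² = r²` and `gcd(p, q) = 1`. -/
def IsPPT (p q r : ℕ) : Prop :=
  0 < p ∧ 0 < q ∧ 0 < r ∧ p ^ 2 + q ^ 2 = r ^ 2 ∧ Nat.gcd p q = 1

/-- A lattice point `P ∈ ℤ²` is rotatable by the angle `θ` if its counterclockwise
rotation about the origin by `θ` is again a lattice point. -/
def RotatableBy (P : ℤ × ℤ) (θ : ℝ) : Prop :=
  ∃ Q : ℤ × ℤ, (Q.1 : ℝ) = P.1 * Real.cos θ - P.2 * Real.sin θ ∧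
    (Q.2 : ℝ) = P.1 * Real.sin θ + P.2 * Real.cos θ

/-- The set of primitive Pythagorean triples, where `(p, q, r)` and `(q, p, r)`
are counted separately. -/
def PPT : Set (ℕ × ℕ × ℕ) := {t | IsPPT t.1 t.2.1 t.2.2}

/-- The triangle with vertices at the origin, `A` and `B` is rotatable if there is
an angle `θ`, not an integer multiple of `90°`, by which both `A` and `B` are
rotatable. -/
def RotatableTriangle (A B : ℤ × ℤ) : Prop :=
  ∃ θ : ℝ, (∀ k : ℤ, θ ≠ k * (π / 2)) ∧ RotatableBy A θ ∧ RotatableBy B θ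

/-- `R N` is the number of unordered pairs `{A, B}` of distinct nonzero points of the
grid `[N] × [N]` such that the triangle with vertices `(0,0)`, `A`, `B` is rotatable. -/
def R (N : ℕ) : ℕ :=
  {s : Set (ℤ × ℤ) | ∃ A B : ℤ × ℤ, A ≠ B ∧ A ≠ (0, 0) ∧ B ≠ (0, 0) ∧
    inGrid N A ∧ inGrid N B ∧ RotatableTriangle A B ∧ s = {A, B}}.ncard

def FF (m n : ℕ) : ℚ := if 1 ≤ m ∧ 1 ≤ n ∧ Nat.gcd m n = 1 ∧ (m+n) % 2 = 1 then 1/((m:ℚ)^2+(n:ℚ)^2)^2 else 0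

theorem FF12 : ∑ m ∈ Finset.range 12, ∑ n ∈ Finset.range 12, FF m n ≤ 0.119 := by
  norm_num [Finset.sum_range_succ, FF]

theorem FF_nonneg (m n : ℕ) : 0 ≤ FF m n := by
  unfold FF; split_ifs <;> positivity

theorem FF_le (m n K : ℕ) (hK : 1 ≤ K) (h : K ≤ m ∨ K ≤ n) : FF m n ≤ 1/(K:ℚ)^4 := by
  unfold FF
  split_ifs
  · have hK' : (1:ℚ) ≤ K := by exact_mod_cast hK
    apply one_div_le_one_div_of_le (by positivity)
    have : (K:ℚ)^2 ≤ (m:ℚ)^2+(n:ℚ)^2 := by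
      rcases h with h | h
      · have : (K:ℚ) ≤ m := by exact_mod_cast h
        nlinarith [sq_nonneg (n:ℚ)]
      · have : (K:ℚ) ≤ n := by exact_mod_cast h
        nlinarith [sq_nonneg (m:ℚ)]
    nlinarith [sq_nonneg (K:ℚ)]
  · positivity

theorem FF_diag (m : ℕ) : FF m m = 0 := by
  unfold FF; rw [if_neg]; omega

theorem FF_box (k : ℕ) : ∑ m ∈ Finset.range (k+12), ∑ n ∈ Finset.range (k+12), FF m n ≤
    0.1266 - 1/(((k:ℚ)+12)*(k+11)) := by
  induction k with
  | zero => refine le_trans (by simpa using FF12) (by norm_num)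
  | succ k ih =>
    have e : k + 1 + 12 = (k+12)+1 := by ring
    rw [e, Finset.sum_range_succ]
    simp_rw [Finset.sum_range_succ _ (k+12)]
    rw [Finset.sum_add_distrib, FF_diag]
    have h1 : ∑ m ∈ Finset.range (k+12), FF m (k+12) ≤ (k+12) * (1/((k+12:ℕ):ℚ)^4) := by
      refine (Finset.sum_le_card_nsmul _ _ (1/((k+12:ℕ):ℚ)^4) ?_).trans ?_
      · intro m _; exact FF_le _ _ _ (by omega) (Or.inr le_rfl)
      · simp
    have h2 : ∑ m ∈ Finset.range (k+12), FF (k+12) m ≤ (k+12) * (1/((k+12:ℕ):ℚ)^4) := by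
      refine (Finset.sum_le_card_nsmul _ _ (1/((k+12:ℕ):ℚ)^4) ?_).trans ?_
      · intro m _; exact FF_le _ _ _ (by omega) (Or.inl le_rfl)
      · simp
    have h3 : 2 * (((k:ℚ)+12) * (1/((k+12:ℕ):ℚ)^4)) + 1/((((k+1:ℕ):ℚ)+12)*((k+1:ℕ)+11)) ≤ 1/(((k:ℚ)+12)*(k+11)) := by
      push_cast
      have hk : (0:ℚ) ≤ k := by positivity
      have : 1/(((k:ℚ)+12)*(k+11)) - (2 * (((k:ℚ)+12) * (1/((k:ℚ)+12)^4)) + 1/(((k:ℚ)+1+12)*((k:ℚ)+1+11))) = 2 / ((k+12)^3*(k+11)*(k+13)) := by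
        field_simp
        ring
      have : 0 ≤ 2 / (((k:ℚ)+12)^3*(k+11)*(k+13)) := by positivity
      linarith
    linarith

def FR (z : ℕ × ℕ) : ℝ := (FF z.1 z.2 : ℚ)

theorem FR_nonneg (z) : 0 ≤ FR z := by
  unfold FR; exact_mod_cast FF_nonneg _ _

theorem FR_sum (u : Finset (ℕ × ℕ)) : ∑ z ∈ u, FR z ≤ 0.1266 := by
  obtain ⟨k, hk⟩ : ∃ k, ∀ z ∈ u, z.1 < k ∧ z.2 < k := by
    refine ⟨u.sup (fun z => z.1 + z.2) + 1, fun z hz => ?_⟩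
    have := Finset.le_sup (f := fun z : ℕ × ℕ => z.1 + z.2) hz
    omega
  have h1 : ∑ z ∈ u, FR z ≤ ∑ z ∈ Finset.range (k+12) ×ˢ Finset.range (k+12), FR z := by
    apply Finset.sum_le_sum_of_subset_of_nonneg
    · intro z hz
      have := hk z hz
      simp only [Finset.mem_product, Finset.mem_range]
      omega
    · intros; exact FR_nonneg _
  refine h1.trans ?_
  rw [Finset.sum_product]
  have h2 := FF_box k
  have h3 : (0:ℚ) ≤ 1/(((k:ℚ)+12)*(k+11)) := by positivity
  have h4 : ∑ m ∈ Finset.range (k+12), ∑ n ∈ Finset.range (k+12), FF m n ≤ 0.1266 := by linarith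
  unfold FR
  have h5 : ((∑ m ∈ Finset.range (k+12), ∑ n ∈ Finset.range (k+12), FF m n : ℚ) : ℝ) ≤ ((0.1266 : ℚ) : ℝ) := by
    exact_mod_cast h4
  push_cast at h5
  refine h5.trans (by norm_num)

theorem FR_summable : Summable FR := summable_of_sum_le FR_nonneg FR_sum

theorem FR_tsum : ∑' z, FR z ≤ 0.1266 := Real.tsum_le_of_sum_le FR_nonneg FR_sum

def psi (z : ℕ × ℕ) : ℕ × ℕ × ℕ :=
  if z.2 < z.1 then (z.1^2-z.2^2, 2*z.1*z.2, z.1^2+z.2^2) else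
    (2*z.1*z.2, z.2^2-z.1^2, z.1^2+z.2^2)

theorem ppt_odd (p q r : ℕ) (h : IsPPT p q r) (hp : p % 2 = 1) :
    ∃ m n : ℕ, 1 ≤ n ∧ n < m ∧ Nat.gcd m n = 1 ∧ (m+n) % 2 = 1 ∧
      p = m^2 - n^2 ∧ q = 2*m*n ∧ r = m^2+n^2 := by
  obtain ⟨h1, h2, h3, h4, h5⟩ := h
  have hpt : PythagoreanTriple (p:ℤ) q r := by
    unfold PythagoreanTriple
    have : ((p^2+q^2 : ℕ):ℤ) = (r^2:ℕ) := by rw [h4]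
    push_cast at this; linarith
  obtain ⟨m, n, e1, e2, e3, e4, e5, e6⟩ := hpt.coprime_classification' (by simpa using h5) (by omega) (by omega)
  lift m to ℕ using e6
  have hq : (0:ℤ) < q := by exact_mod_cast h2
  have hn : 0 < n := by
    by_contra hh
    push Not at hh
    have : (m:ℤ) * n ≤ 0 := mul_nonpos_of_nonneg_of_nonpos (by positivity) hh
    linarith
  lift n to ℕ using hn.le
  have hp' : (0:ℤ) < p := by exact_mod_cast h1
  have hmn : n < m := by
    have : (n:ℤ) < m := by nlinarith
    exact_mod_cast this
  refine ⟨m, n, by omega, hmn, by simpa using e4, by omega, ?_, by exact_mod_cast e2, by exact_mod_cast e3⟩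
  have : n^2 ≤ m^2 := Nat.pow_le_pow_left hmn.le 2
  zify [this]; exact e1

theorem ppt_param (t : PPT) : ∃ z : ℕ × ℕ, psi z = t ∧
    FR z = 1 / ((t : ℕ × ℕ × ℕ).2.2 : ℝ)^2 := by
  obtain ⟨⟨p, q, r⟩, h⟩ := t
  have h : IsPPT p q r := h
  have key : p % 2 = 1 ∨ q % 2 = 1 := by
    by_contra hh
    have := Nat.dvd_gcd (show 2 ∣ p by omega) (show 2 ∣ q by omega)
    rw [h.2.2.2.2] at this; omega
  rcases key with hp | hq
  · obtain ⟨m, n, e1, e2, e3, e4, e5, e6, e7⟩ := ppt_odd p q r h hp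
    refine ⟨(m, n), ?_, ?_⟩
    · simp [psi, e2, e5, e6, e7]
    · simp only [FR, FF]
      rw [if_pos ⟨by omega, e1, e3, e4⟩, e7]; push_cast; rfl
  · obtain ⟨m, n, e1, e2, e3, e4, e5, e6, e7⟩ := ppt_odd q p r
      ⟨h.2.1, h.1, h.2.2.1, by rw [← h.2.2.2.1]; ring, by rw [Nat.gcd_comm]; exact h.2.2.2.2⟩ hq
    refine ⟨(n, m), ?_, ?_⟩
    · simp only [psi, e5, e6, e7]
      rw [if_neg (by simp; omega)]
      simp only [Prod.mk.injEq]
      refine ⟨by ring, trivial, by ring⟩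
    · simp only [FR, FF]
      rw [if_pos ⟨e1, by omega, by rw [Nat.gcd_comm]; exact e3, by omega⟩, e7]; push_cast; ring

theorem ppt_sum : Summable (fun t : PPT => 1 / ((t : ℕ × ℕ × ℕ).2.2 : ℝ)^2) ∧
    ∑' t : PPT, 1 / ((t : ℕ × ℕ × ℕ).2.2 : ℝ)^2 ≤ 0.1266 := by
  choose φ h1 h2 using ppt_param
  have inj : Function.Injective φ := by
    intro a b hab
    apply Subtype.ext
    rw [← h1 a, ← h1 b, hab]
  simp_rw [← h2]
  refine ⟨FR_summable.comp_injective inj, ?_⟩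
  exact (tsum_comp_le_tsum_of_inj FR_summable FR_nonneg inj).trans FR_tsum

def DD (p q r N : ℕ) : Finset (ℤ × ℤ) :=
  (Finset.Ico (0:ℤ) N ×ˢ Finset.Ico (0:ℤ) N).filter
    (fun A => A ≠ (0,0) ∧ (r:ℤ) ∣ p * A.1 - q * A.2 ∧ (r:ℤ) ∣ q * A.1 + p * A.2)

theorem cop (p q r : ℕ) (h : IsPPT p q r) : IsCoprime (r:ℤ) (p:ℤ) := by
  obtain ⟨h1, h2, h3, h4, h5⟩ := h
  have h6 : Nat.Coprime (q^2) (p) := (Nat.Coprime.symm h5).pow_left 2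
  have h7 : Nat.Coprime (r^2) p := by
    rw [← h4, Nat.add_comm, pow_two p]
    simpa using h6
  have : Nat.Coprime r p := Nat.Coprime.coprime_dvd_left (Dvd.intro_left (r^1) (by ring)) h7
  exact Nat.isCoprime_iff_coprime.mpr this

theorem five_le (p q r : ℕ) (h : IsPPT p q r) : 2 ≤ r := by
  obtain ⟨h1, h2, h3, h4, h5⟩ := h
  by_contra hh
  have : r = 1 := by omega
  subst this
  nlinarith

theorem norm_dvd (p q r : ℕ) (h : IsPPT p q r) (x y : ℤ) (h1 : (r:ℤ) ∣ p * x - q * y)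
    (h2 : (r:ℤ) ∣ q * x + p * y) : (r:ℤ) ∣ x^2+y^2 := by
  apply (cop p q r h).dvd_of_dvd_mul_left
  have : (p:ℤ) * (x^2+y^2) = x * (p * x - q * y) + y * (q * x + p * y) := by ring
  rw [this]
  exact dvd_add (h1.mul_left _) (h2.mul_left _)

theorem norm_ge (p q r : ℕ) (h : IsPPT p q r) (x y : ℤ) (h1 : (r:ℤ) ∣ p * x - q * y)
    (h2 : (r:ℤ) ∣ q * x + p * y) (hlt : x^2+y^2 < r) : x = 0 ∧ y = 0 := by
  have := Int.eq_zero_of_dvd_of_nonneg_of_lt (by positivity) hlt (norm_dvd p q r h x y h1 h2)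
  constructor <;> nlinarith [sq_nonneg x, sq_nonneg y]

theorem ediv_close (s a b : ℤ) (hs : 0 < s) (h : a / s = b / s) : |a - b| ≤ s - 1 := by
  have h1 := Int.mul_ediv_add_emod a s
  have h2 := Int.mul_ediv_add_emod b s
  have := Int.emod_nonneg a hs.ne'
  have := Int.emod_nonneg b hs.ne'
  have := Int.emod_lt_of_pos a hs
  have := Int.emod_lt_of_pos b hs
  rw [h] at h1
  rw [abs_le]; constructor <;> linarith

theorem card1 (p q r N : ℕ) (h : IsPPT p q r) : (DD p q r N).card ≤ N * (N / r + 1) := by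
  have hr : (0:ℤ) < r := by exact_mod_cast h.2.2.1
  have : (DD p q r N).card ≤ (Finset.Ico (0:ℤ) N ×ˢ Finset.Ico (0:ℤ) (N / r + 1)).card := by
    apply Finset.card_le_card_of_injOn (fun A : ℤ × ℤ => (A.1, A.2 / (r:ℤ)))
    · rintro ⟨x, y⟩ hA
      simp only [DD, Finset.coe_filter, Finset.mem_product, Finset.mem_Ico, Set.mem_ofPred_eq] at hA
      simp only [Finset.coe_product, Set.mem_prod, Finset.mem_coe, Finset.mem_Ico]
      obtain ⟨⟨⟨a1, a2⟩, a3, a4⟩, -⟩ := hA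
      refine ⟨⟨a1, a2⟩, Int.ediv_nonneg a3 hr.le, ?_⟩
      have := Int.ediv_le_ediv hr a4.le
      omega
    · rintro ⟨x, y⟩ hA ⟨x', y'⟩ hB hAB
      simp only [DD, Finset.coe_filter, Finset.mem_product, Finset.mem_Ico, Set.mem_ofPred_eq] at hA hB
      simp only [Prod.mk.injEq] at hAB ⊢
      obtain ⟨rfl, hy⟩ := hAB
      refine ⟨rfl, ?_⟩
      have hc := ediv_close _ _ _ hr hy
      have hd : (r:ℤ) ∣ y - y' := by
        apply (cop p q r h).dvd_of_dvd_mul_left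
        have := dvd_sub hA.2.2.2 hB.2.2.2
        convert this using 1; ring
      have := Int.eq_zero_of_abs_lt_dvd hd (by omega)
      omega
  refine this.trans ?_
  rw [Finset.card_product, Int.card_Ico, Int.card_Ico]
  have : ((N:ℤ) / r + 1 - 0).toNat = N / r + 1 := by
    have e : (N:ℤ) / r + 1 - 0 = ((N / r + 1 : ℕ) : ℤ) := by push_cast; ring
    rw [e, Int.toNat_natCast]
  rw [this]; simp

theorem card2 (p q r N s : ℕ) (h : IsPPT p q r) (hs : 0 < s) (hsr : 2 * s^2 ≤ r) :
    (DD p q r N).card ≤ (N / s + 1) * (N / s + 1) := by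
  have hs' : (0:ℤ) < s := by exact_mod_cast hs
  have : (DD p q r N).card ≤ (Finset.Ico (0:ℤ) (N / s + 1) ×ˢ Finset.Ico (0:ℤ) (N / s + 1)).card := by
    apply Finset.card_le_card_of_injOn (fun A : ℤ × ℤ => (A.1 / (s:ℤ), A.2 / (s:ℤ)))
    · rintro ⟨x, y⟩ hA
      simp only [DD, Finset.coe_filter, Finset.mem_product, Finset.mem_Ico, Set.mem_ofPred_eq] at hA
      simp only [Finset.coe_product, Set.mem_prod, Finset.mem_coe, Finset.mem_Ico]
      obtain ⟨⟨⟨a1, a2⟩, a3, a4⟩, -⟩ := hA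
      have := Int.ediv_le_ediv hs' a4.le
      have := Int.ediv_le_ediv hs' a2.le
      exact ⟨⟨Int.ediv_nonneg a1 hs'.le, by omega⟩, Int.ediv_nonneg a3 hs'.le, by omega⟩
    · rintro ⟨x, y⟩ hA ⟨x', y'⟩ hB hAB
      simp only [DD, Finset.coe_filter, Finset.mem_product, Finset.mem_Ico, Set.mem_ofPred_eq] at hA hB
      simp only [Prod.mk.injEq] at hAB ⊢
      have hc := ediv_close _ _ _ hs' hAB.1
      have hd := ediv_close _ _ _ hs' hAB.2
      have hc2 : (x-x')^2 ≤ ((s:ℤ)-1)^2 := sq_le_sq' (by linarith [(abs_le.mp hc).1]) (abs_le.mp hc).2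
      have hd2 : (y-y')^2 ≤ ((s:ℤ)-1)^2 := sq_le_sq' (by linarith [(abs_le.mp hd).1]) (abs_le.mp hd).2
      have hsr' : 2 * (s:ℤ)^2 ≤ r := by exact_mod_cast hsr
      have := norm_ge p q r h (x-x') (y-y')
        (by
          have e := dvd_sub hA.2.2.1 hB.2.2.1
          have e2 : (p:ℤ) * (x - x') - q * (y - y') = p * x - q * y - (p * x' - q * y') := by ring
          rw [e2]; exact e)
        (by
          have e := dvd_sub hA.2.2.2 hB.2.2.2
          have e2 : (q:ℤ) * (x - x') + p * (y - y') = q * x + p * y - (q * x' + p * y') := by ring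
          rw [e2]; exact e) (by nlinarith)
      omega
  refine this.trans ?_
  rw [Finset.card_product, Int.card_Ico]
  have : ((N:ℤ) / s + 1 - 0).toNat = N / s + 1 := by
    have e : (N:ℤ) / s + 1 - 0 = ((N / s + 1 : ℕ) : ℤ) := by push_cast; ring
    rw [e, Int.toNat_natCast]
  rw [this]

theorem DD_le (p q r N : ℕ) (h : IsPPT p q r) (A) (hA : A ∈ DD p q r N) : r ≤ 2 * N^2 := by
  by_contra hh
  push Not at hh
  simp only [DD, Finset.mem_filter, Finset.mem_product, Finset.mem_Ico] at hA
  obtain ⟨⟨⟨a1, a2⟩, a3, a4⟩, a5, a6, a7⟩ := hA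
  have hh' : 2 * (N:ℤ)^2 < r := by exact_mod_cast hh
  have := norm_ge p q r h A.1 A.2 a6 a7 (by nlinarith)
  exact a5 (Prod.ext this.1 this.2)

theorem card2' (p q r N : ℕ) (h : IsPPT p q r) (hr : r ≤ 2 * N^2) :
    (DD p q r N).card * r ≤ 32 * N^2 := by
  have h5 := five_le p q r h
  set s := Nat.sqrt (r/2) with hs
  have hs0 : 0 < s := Nat.sqrt_pos.mpr (by omega)
  have hs1 : s * s ≤ r / 2 := Nat.sqrt_le _
  have hs2 : r / 2 < (s+1)*(s+1) := Nat.lt_succ_sqrt _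
  have hsN : s ≤ N := by
    by_contra hh
    push Not at hh
    have : (N+1)*(N+1) ≤ s * s := Nat.mul_le_mul hh hh
    have : s * s ≤ N^2 := by omega
    nlinarith
  have c := card2 p q r N s h hs0 (by rw [pow_two]; omega)
  have hr8 : r ≤ 8 * (s*s) := by
    have : r ≤ 2 * ((s+1)*(s+1)) := by omega
    nlinarith
  have hd : (N / s + 1) * s ≤ 2 * N := by
    have := Nat.div_mul_le_self N s
    rw [add_mul]; omega
  calc (DD p q r N).card * r ≤ ((N / s + 1) * (N / s + 1)) * (8 * (s * s)) := Nat.mul_le_mul c hr8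
    _ = 8 * (((N / s + 1) * s) * ((N / s + 1) * s)) := by ring
    _ ≤ 8 * ((2 * N) * (2 * N)) := by gcongr
    _ = 32 * N^2 := by ring

theorem rot_axes (A B : ℤ × ℤ) (h : RotatableTriangle A B) :
    ∃ c s : ℝ, 0 < c ∧ 0 < s ∧ c^2+s^2 = 1 ∧
      (∃ Q : ℤ × ℤ, (Q.1 : ℝ) = A.1 * c - A.2 * s ∧ (Q.2 : ℝ) = A.1 * s + A.2 * c) ∧
      (∃ Q : ℤ × ℤ, (Q.1 : ℝ) = B.1 * c - B.2 * s ∧ (Q.2 : ℝ) = B.1 * s + B.2 * c) := by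
  obtain ⟨θ, hθ, ⟨Q, hQ1, hQ2⟩, ⟨S, hS1, hS2⟩⟩ := h
  have hs : Real.sin θ ≠ 0 := by
    intro h0
    obtain ⟨n, hn⟩ := Real.sin_eq_zero_iff.mp h0
    apply hθ (2*n); rw [← hn]; push_cast; ring
  have hc : Real.cos θ ≠ 0 := by
    intro h0
    obtain ⟨n, hn⟩ := Real.cos_eq_zero_iff.mp h0
    apply hθ (2*n+1); rw [hn]; push_cast; ring
  have h1 := Real.sin_sq_add_cos_sq θ
  rcases lt_or_gt_of_ne hs with hs | hs <;> rcases lt_or_gt_of_ne hc with hc | hc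
  · refine ⟨-cos θ, -sin θ, by linarith, by linarith, by linarith, ⟨(-Q.1, -Q.2), ?_, ?_⟩, ⟨(-S.1, -S.2), ?_, ?_⟩⟩ <;> push_cast <;> linarith
  · refine ⟨-sin θ, cos θ, by linarith, by linarith, by linarith, ⟨(-Q.2, Q.1), ?_, ?_⟩, ⟨(-S.2, S.1), ?_, ?_⟩⟩ <;> push_cast <;> linarith
  · refine ⟨sin θ, -cos θ, by linarith, by linarith, by linarith, ⟨(Q.2, -Q.1), ?_, ?_⟩, ⟨(S.2, -S.1), ?_, ?_⟩⟩ <;> push_cast <;> linarith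
  · exact ⟨cos θ, sin θ, by linarith, by linarith, by linarith, ⟨Q, hQ1, hQ2⟩, ⟨S, hS1, hS2⟩⟩

theorem int_of_real (p q r : ℕ) (c s : ℝ) (hc : c * r = p) (hs : s * r = q) (A : ℤ × ℤ)
    (h : ∃ Q : ℤ × ℤ, (Q.1 : ℝ) = A.1 * c - A.2 * s ∧ (Q.2 : ℝ) = A.1 * s + A.2 * c) :
    (r:ℤ) ∣ p * A.1 - q * A.2 ∧ (r:ℤ) ∣ q * A.1 + p * A.2 := by
  obtain ⟨Q, h1, h2⟩ := h
  refine ⟨⟨Q.1, ?_⟩, ⟨Q.2, ?_⟩⟩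
  · have : ((p * A.1 - q * A.2 : ℤ) : ℝ) = (r * Q.1 : ℤ) := by
      push_cast; rw [h1, ← hc, ← hs]; ring
    exact_mod_cast this
  · have : ((q * A.1 + p * A.2 : ℤ) : ℝ) = (r * Q.2 : ℤ) := by
      push_cast; rw [h2, ← hc, ← hs]; ring
    exact_mod_cast this

theorem rot_ppt (A B : ℤ × ℤ) (hA : A ≠ (0,0)) (h : RotatableTriangle A B) :
    ∃ t : PPT, ((t.1.2.2:ℤ) ∣ t.1.1 * A.1 - t.1.2.1 * A.2 ∧ (t.1.2.2:ℤ) ∣ t.1.2.1 * A.1 + t.1.1 * A.2) ∧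
      ((t.1.2.2:ℤ) ∣ t.1.1 * B.1 - t.1.2.1 * B.2 ∧ (t.1.2.2:ℤ) ∣ t.1.2.1 * B.1 + t.1.1 * B.2) := by
  obtain ⟨c, s, hc, hs, hcs, hQ, hS⟩ := rot_axes A B h
  obtain ⟨Q, h1, h2⟩ := id hQ
  obtain ⟨x, y⟩ := A
  simp only at h1 h2
  have hd : 0 < x^2+y^2 := by
    by_contra hh
    apply hA
    have : x = 0 := by nlinarith [sq_nonneg x, sq_nonneg y]
    have : y = 0 := by nlinarith [sq_nonneg x, sq_nonneg y]
    simp_all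
  have hdR : (0:ℝ) < (x:ℝ)^2+(y:ℝ)^2 := by exact_mod_cast hd
  have hu : ((x * Q.1 + y * Q.2 : ℤ) : ℝ) = c * (x^2+y^2) := by push_cast; rw [h1, h2]; ring
  have hv : ((x * Q.2 - y * Q.1 : ℤ) : ℝ) = s * (x^2+y^2) := by push_cast; rw [h1, h2]; ring
  have hu0 : 0 < x * Q.1 + y * Q.2 := by
    have : (0:ℝ) < ((x * Q.1 + y * Q.2 : ℤ) : ℝ) := by rw [hu]; positivity
    exact_mod_cast this
  have hv0 : 0 < x * Q.2 - y * Q.1 := by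
    have : (0:ℝ) < ((x * Q.2 - y * Q.1 : ℤ) : ℝ) := by rw [hv]; positivity
    exact_mod_cast this
  generalize hd' : x^2+y^2 = d at *
  generalize x * Q.1 + y * Q.2 = u at *
  generalize x * Q.2 - y * Q.1 = v at *
  have hdd : (x:ℝ)^2+(y:ℝ)^2 = d := by rw [← hd']; push_cast; rfl
  rw [hdd] at hu hv hdR
  lift u to ℕ using hu0.le
  lift v to ℕ using hv0.le
  lift d to ℕ using hd.le
  push_cast at hu hv hdR
  have hsum : u^2+v^2 = d^2 := by
    have : (u:ℝ)^2+(v:ℝ)^2 = (d:ℝ)^2 := by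
      rw [hu, hv]; linear_combination (d:ℝ)^2 * hcs
    exact_mod_cast this
  have hu0 : 0 < u := by exact_mod_cast hu0
  have hv0 : 0 < v := by exact_mod_cast hv0
  have hd0 : 0 < d := by exact_mod_cast hd
  obtain ⟨g, p, q, hg, hpq, rfl, rfl⟩ := Nat.exists_coprime' (m := u) (n := v) (Nat.gcd_pos_of_pos_left _ hu0)
  have hgd : g ∣ d := by
    rw [← Nat.pow_dvd_pow_iff (two_ne_zero), ← hsum]
    exact ⟨p^2+q^2, by ring⟩
  obtain ⟨r, rfl⟩ := hgd
  have hr0 : 0 < r := Nat.pos_of_mul_pos_left hd0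
  have hgR : (g:ℝ) ≠ 0 := by positivity
  refine ⟨⟨(p, q, r), Nat.pos_of_mul_pos_right hu0, Nat.pos_of_mul_pos_right hv0, hr0, ?_, hpq⟩, ?_, ?_⟩
  · have : g^2 * (p^2+q^2) = g^2 * r^2 := by linarith
    exact Nat.eq_of_mul_eq_mul_left (by positivity) this
  all_goals
    refine int_of_real p q r c s ?_ ?_ _ (by assumption)
    · apply mul_right_cancel₀ hgR; push_cast at hu; linarith
    · apply mul_right_cancel₀ hgR; push_cast at hv; linarith

open Classical in
def UU (N : ℕ) (t : PPT) : Finset (Set (ℤ × ℤ)) :=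
  ((DD t.1.1 t.1.2.1 t.1.2.2 N).powersetCard 2).image (fun s : Finset (ℤ × ℤ) => (s : Set (ℤ × ℤ)))

def hh (N : ℕ) (t : PPT) : ℝ := (min (1/(t.1.2.2:ℝ) + 1/(N:ℝ)) (32/(t.1.2.2:ℝ)))^2 / 2

theorem UU_card (N : ℕ) (hN : 0 < N) (t : PPT) (ht : t.1.2.2 ≤ 2 * N^2) :
    ((UU N t).card : ℝ) ≤ hh N t * (N:ℝ)^4 := by
  obtain ⟨⟨p, q, r⟩, h⟩ := t
  have h : IsPPT p q r := h
  have h1 : (UU N ⟨⟨p, q, r⟩, h⟩).card ≤ (DD p q r N).card.choose 2 :=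
    Finset.card_image_le.trans (by rw [Finset.card_powersetCard])
  simp only [hh] at ht ⊢
  set c := (DD p q r N).card with hc
  have h2 : ((c.choose 2 : ℕ) : ℝ) ≤ (c:ℝ)^2/2 := by
    rw [Nat.cast_choose_two]; nlinarith [Nat.cast_nonneg (α := ℝ) c]
  have hr : (0:ℝ) < r := by exact_mod_cast h.2.2.1
  have hN' : (0:ℝ) < N := by exact_mod_cast hN
  have h3 : (c:ℝ) ≤ min (1/(r:ℝ) + 1/(N:ℝ)) (32/(r:ℝ)) * (N:ℝ)^2 := by
    rw [min_mul_of_nonneg _ _ (by positivity)]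
    apply le_min
    · have := card1 p q r N h
      have : (c:ℝ) ≤ N * (((N/r : ℕ):ℝ) + 1) := by exact_mod_cast this
      have h4 : ((N/r : ℕ):ℝ) ≤ (N:ℝ)/r := Nat.cast_div_le
      calc (c:ℝ) ≤ N * (((N/r : ℕ):ℝ) + 1) := this
        _ ≤ N * ((N:ℝ)/r + 1) := by gcongr
        _ = _ := by field_simp
    · have := card2' p q r N h ht
      have : (c:ℝ) * r ≤ 32 * N^2 := by exact_mod_cast this
      rw [div_mul_eq_mul_div, le_div_iff₀ hr]; exact this
  have h5 : (c:ℝ)^2 ≤ (min (1/(r:ℝ) + 1/(N:ℝ)) (32/(r:ℝ)) * (N:ℝ)^2)^2 := by gcongr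
  have h6 : ((UU N ⟨⟨p, q, r⟩, h⟩).card : ℝ) ≤ ((c.choose 2 : ℕ) : ℝ) := by exact_mod_cast h1
  rw [mul_pow] at h5
  nlinarith

theorem fin_ppt (N : ℕ) : {t : PPT | t.1.2.2 ≤ N}.Finite := by
  have : (Set.Iic N ×ˢ (Set.Iic N ×ˢ Set.Iic N)).Finite :=
    (Set.finite_Iic N).prod ((Set.finite_Iic N).prod (Set.finite_Iic N))
  refine (this.preimage (f := fun t : PPT => t.1) Subtype.val_injective.injOn).subset ?_
  rintro ⟨⟨p, q, r⟩, h⟩ hr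
  have h : IsPPT p q r := h
  obtain ⟨h1, h2, h3, h4, h5⟩ := h
  simp only [Set.mem_ofPred_eq, Set.mem_preimage, Set.mem_prod, Set.mem_Iic] at hr ⊢
  have : p ≤ r := by nlinarith
  have : q ≤ r := by nlinarith
  omega

theorem hh_bound (N : ℕ) (t : PPT) : 0 ≤ hh N t ∧ hh N t ≤ 512 * (1 / (t.1.2.2:ℝ)^2) := by
  have hr : (0:ℝ) < t.1.2.2 := by exact_mod_cast t.2.2.2.1
  constructor
  · unfold hh; positivity
  · unfold hh
    have : 512 * (1 / (t.1.2.2:ℝ)^2) = (32/(t.1.2.2:ℝ))^2/2 := by field_simp; norm_num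
    rw [this]
    gcongr
    exact min_le_right _ _

theorem hh_summable (N : ℕ) : Summable (hh N) :=
  Summable.of_nonneg_of_le (fun t => (hh_bound N t).1) (fun t => (hh_bound N t).2)
    (ppt_sum.1.mul_left 512)

theorem R_le (N : ℕ) (hN : 0 < N) : (R N : ℝ) / (N:ℝ)^4 ≤ ∑' t, hh N t := by
  classical
  set F := (fin_ppt (2*N^2)).toFinset with hF
  have h1 : R N ≤ (F.biUnion (UU N)).card := by
    unfold R
    rw [← Set.ncard_coe_finset]
    apply Set.ncard_le_ncard _ (Finset.finite_toSet _)
    rintro s ⟨A, B, hAB, hA, hB, gA, gB, hR, rfl⟩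
    obtain ⟨t, tA, tB⟩ := rot_ppt A B hA hR
    have mA : A ∈ DD t.1.1 t.1.2.1 t.1.2.2 N := by
      simp only [DD, Finset.mem_filter, Finset.mem_product, Finset.mem_Ico]
      exact ⟨⟨⟨gA.1, gA.2.1⟩, gA.2.2⟩, hA, tA⟩
    have mB : B ∈ DD t.1.1 t.1.2.1 t.1.2.2 N := by
      simp only [DD, Finset.mem_filter, Finset.mem_product, Finset.mem_Ico]
      exact ⟨⟨⟨gB.1, gB.2.1⟩, gB.2.2⟩, hB, tB⟩
    simp only [Finset.mem_coe, Finset.mem_biUnion]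
    refine ⟨t, ?_, ?_⟩
    · rw [hF, Set.Finite.mem_toFinset]
      exact DD_le _ _ _ N t.2 A mA
    · unfold UU
      rw [Finset.mem_image]
      refine ⟨{A, B}, ?_, by simp⟩
      rw [Finset.mem_powersetCard]
      refine ⟨?_, Finset.card_pair hAB⟩
      intro z hz
      simp only [Finset.mem_insert, Finset.mem_singleton] at hz
      rcases hz with rfl | rfl <;> assumption
  have h2 : R N ≤ ∑ t ∈ F, (UU N t).card := h1.trans Finset.card_biUnion_le
  have h3 : (R N : ℝ) ≤ ∑ t ∈ F, ((UU N t).card : ℝ) := by exact_mod_cast h2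
  have hN' : (0:ℝ) < N := by exact_mod_cast hN
  rw [div_le_iff₀ (by positivity)]
  refine h3.trans ?_
  have h4 : ∑ t ∈ F, ((UU N t).card : ℝ) ≤ ∑ t ∈ F, hh N t * (N:ℝ)^4 := by
    apply Finset.sum_le_sum
    intro t ht
    rw [hF, Set.Finite.mem_toFinset] at ht
    exact UU_card N hN t ht
  refine h4.trans ?_
  rw [← Finset.sum_mul]
  gcongr
  exact (hh_summable N).sum_le_tsum F (fun t _ => (hh_bound N t).1)

theorem hh_tendsto : Filter.Tendsto (fun N => ∑' t, hh N t) Filter.atTop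
    (nhds (∑' t : PPT, 1 / (2 * ((t : ℕ × ℕ × ℕ).2.2 : ℝ) ^ 2))) := by
  apply tendsto_tsum_of_dominated_convergence (ppt_sum.1.mul_left 512)
  · intro t
    have hr : (0:ℝ) < t.1.2.2 := by exact_mod_cast t.2.2.2.1
    have h1 : Filter.Tendsto (fun N : ℕ => 1/(t.1.2.2:ℝ) + 1/(N:ℝ)) Filter.atTop (nhds (1/(t.1.2.2:ℝ) + 0)) :=
      tendsto_const_nhds.add tendsto_one_div_atTop_nhds_zero_nat
    have h2 := ((h1.min (tendsto_const_nhds (x := 32/(t.1.2.2:ℝ)))).pow 2).div_const 2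
    have h3 : min (1/(t.1.2.2:ℝ) + 0) (32/(t.1.2.2:ℝ)) = 1/(t.1.2.2:ℝ) := by
      rw [add_zero]; apply min_eq_left; gcongr; norm_num
    rw [h3] at h2
    have h4 : 1 / (2 * (t.1.2.2:ℝ)^2) = (1/(t.1.2.2:ℝ))^2/2 := by
      field_simp
    rw [h4]
    exact h2
  · refine Filter.Eventually.of_forall fun N t => ?_
    rw [Real.norm_of_nonneg (hh_bound N t).1]
    exact (hh_bound N t).2

/-- The number of rotatable triangles in `[N] × [N]` with a vertex at the origin is
asymptotically at most `(∑_{(p,q,r) ∈ 𝒫} 1/(2r²)) · N⁴ ≤ 0.0633 · N⁴`. -/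
theorem rotatable_triangles_limsup :
    Filter.limsup (fun N : ℕ => (R N : ℝ) / (N : ℝ) ^ 4) Filter.atTop ≤
      ∑' t : PPT, 1 / (2 * ((t : ℕ × ℕ × ℕ).2.2 : ℝ) ^ 2) ∧
    Filter.limsup (fun N : ℕ => (R N : ℝ) / (N : ℝ) ^ 4) Filter.atTop ≤ 0.0633 := by

  have key : Filter.limsup (fun N : ℕ => (R N : ℝ) / (N : ℝ) ^ 4) Filter.atTop ≤
      ∑' t : PPT, 1 / (2 * ((t : ℕ × ℕ × ℕ).2.2 : ℝ) ^ 2) := by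
    rw [← hh_tendsto.limsup_eq]
    apply Filter.limsup_le_limsup
    · filter_upwards [Filter.eventually_gt_atTop 0] with N hN using R_le N hN
    · apply Filter.IsBoundedUnder.isCoboundedUnder_le
      exact ⟨0, Filter.eventually_map.mpr (Filter.Eventually.of_forall fun N => by positivity)⟩
    · exact hh_tendsto.isBoundedUnder_le
  refine ⟨key, key.trans ?_⟩
  have e : ∀ t : PPT, 1 / (2 * ((t : ℕ × ℕ × ℕ).2.2 : ℝ) ^ 2) =
      (1/2) * (1 / ((t : ℕ × ℕ × ℕ).2.2 : ℝ)^2) := fun t => by rw [one_div_mul_one_div]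
  simp_rw [e]
  rw [tsum_mul_left]
  have := ppt_sum.2
  norm_num at this ⊢
  linarith
end
end
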